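/- arXiv:1712.07102 — 8 statements merged into one kernel-verified Lean document; each statement's English description precedes it below -/
import Mathlib

section
/- Fix ω_I ∈ ℝ^q and assume: (i) ∫_{ℝ^k} |F_R(u)| du > 0; (ii) A := ∫_{ℝ^q} F_I(ω_I')·(H_I(ω_I, ω_I') + H_I(ω_I, −ω_I')) dν_I(ω_I') ≠ 0; (iii) there exist a Lebesgue-integrable G : ℝ^k → ℝ and λ₀ > 0 such that |S(ω_I, u; λ)| / c(λ) ≤ G(u) for all u ∈ ℝ^k and all λ ≥ λ₀. Then for every ω_R ∈ ℝ^k, the ratio |S(ω_I, ω_R; λ)| / ∫_{ℝ^k} |S(ω_I, u; λ)| du converges, as λ → ∞, to |F_R(ω_R)| / ∫_{ℝ^k} |F_R(u)| du. -/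
open MeasureTheory Filter Real

/-- the normalized score ratio converges to the normalized spectrum ratio. -/
theorem score_ratio_tendsto_spectrum_ratio
    (q k : ℕ) (X : Type*) [MeasurableSpace X]
    (νI : Measure (Fin q → ℝ)) [IsFiniteMeasure νI]
    (FI : (Fin q → ℝ) → ℝ) (FR : (Fin k → ℝ) → ℝ)
    (hFIc : Continuous FI) (hFIb : ∃ C, ∀ a, |FI a| ≤ C) (hFIi : Integrable FI νI)
    (hFRc : Continuous FR) (hFRb : ∃ C, ∀ u, |FR u| ≤ C) (hFRi : Integrable FR)
    (hFRe : ∀ u, FR (-u) = FR u)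
    (μ : ℝ → Measure X) (hμ : ∀ l, 0 < l → IsProbabilityMeasure (μ l))
    (φ : X → (Fin q → ℝ) × (Fin k → ℝ) → ℝ)
    (hφm : Measurable (Function.uncurry φ))
    (hφb : ∀ x ω, |φ x ω| ≤ 1)
    (HI : (Fin q → ℝ) → (Fin q → ℝ) → ℝ)
    (hHIc : Continuous (Function.uncurry HI)) (hHIb : ∃ C, ∀ a b, |HI a b| ≤ C)
    (HR : (Fin k → ℝ) → ℝ → ℝ)
    (hHRnn : ∀ u l, 0 < l → 0 ≤ HR u l)
    (hHRi : ∀ l, 0 < l → Integrable (fun u => HR u l))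
    (c : ℝ → ℝ) (hc : ∀ l, c l = ∫ u, HR u l) (hcpos : ∀ l, 0 < l → 0 < c l)
    (f₀ : X → ℝ)
    (hf₀ : ∀ x, f₀ x = ∫ p : (Fin q → ℝ) × (Fin k → ℝ),
        FI p.1 * FR p.2 * φ x p ∂(νI.prod volume))
    (S : (Fin q → ℝ) → (Fin k → ℝ) → ℝ → ℝ)
    (hS : ∀ θ w l, S θ w l = ∫ x, f₀ x * φ x (θ, w) ∂(μ l))
    (hOrth : ∀ l, 0 < l → ∀ ωI ωR ωI' ωR',
      (∫ x, φ x (ωI, ωR) * φ x (ωI', ωR') ∂(μ l))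
        = HI ωI ωI' * HR (ωR - ωR') l + HI ωI (-ωI') * HR (ωR + ωR') l)
    (hApprox : ∀ g : (Fin k → ℝ) → ℝ, Continuous g → (∃ C, ∀ u, |g u| ≤ C) → ∀ v : Fin k → ℝ,
      Tendsto (fun l => (∫ u, g u * HR (v - u) l) / c l) atTop (nhds (g v)))
    -- fixed ωI and the assumptions (i)-(iii)
    (ωI : Fin q → ℝ)
    (hFRpos : 0 < ∫ u, |FR u|)
    (hA : (∫ a, FI a * (HI ωI a + HI ωI (-a)) ∂νI) ≠ 0)
    (hdom : ∃ G : (Fin k → ℝ) → ℝ, Integrable G ∧ ∃ l₀ > (0 : ℝ),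
      ∀ u : Fin k → ℝ, ∀ l, l₀ ≤ l → |S ωI u l| / c l ≤ G u) :
    ∀ ωR : Fin k → ℝ,
      Tendsto (fun l => |S ωI ωR l| / ∫ u, |S ωI u l|) atTop
        (nhds (|FR ωR| / ∫ u, |FR u|)) := by
  obtain ⟨CI, hCI⟩ := hHIb
  obtain ⟨CR, hCR⟩ := hFRb
  have hf₀m : StronglyMeasurable f₀ := by
    have h1 : StronglyMeasurable (fun z : X × ((Fin q → ℝ) × (Fin k → ℝ)) =>
        FI z.2.1 * FR z.2.2 * φ z.1 z.2) := by
      apply Measurable.stronglyMeasurable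
      exact ((hFIc.measurable.comp (measurable_fst.comp measurable_snd)).mul
        (hFRc.measurable.comp (measurable_snd.comp measurable_snd))).mul hφm
    have h2 := h1.integral_prod_right' (ν := νI.prod (volume : Measure (Fin k → ℝ)))
    have h3 : f₀ = _ := funext hf₀
    rw [h3]
    exact h2
  have hHIa : Continuous (fun a => HI ωI a) :=
    hHIc.comp (continuous_const.prodMk continuous_id)
  have hHIn : Continuous (fun a => HI ωI (-a)) := hHIa.comp continuous_neg
  have hint1 : Integrable (fun a => FI a * HI ωI a) νI :=
    hFIi.mul_bdd (c := CI) hHIa.aestronglyMeasurable (ae_of_all _ fun a => hCI _ _)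
  have hint2 : Integrable (fun a => FI a * HI ωI (-a)) νI :=
    hFIi.mul_bdd (c := CI) hHIn.aestronglyMeasurable (ae_of_all _ fun a => hCI _ _)
  have hkey : ∀ w l, 0 < l → S ωI w l =
      (∫ a, FI a * (HI ωI a + HI ωI (-a)) ∂νI) * ∫ u, FR u * HR (w - u) l := by
    intro w l hl
    haveI := hμ l hl
    have hm1 : Integrable (fun u => FR u * HR (w - u) l) := by
      have := ((hHRi l hl).comp_sub_left w).bdd_mul (c := CR) hFRc.aestronglyMeasurable
        (ae_of_all _ fun a => hCR a)
      exact this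
    have hm2 : Integrable (fun u => FR u * HR (w + u) l) := by
      have := ((hHRi l hl).comp_add_left w).bdd_mul (c := CR) hFRc.aestronglyMeasurable
        (ae_of_all _ fun a => hCR a)
      exact this
    have heq : (∫ u, FR u * HR (w + u) l) = ∫ u, FR u * HR (w - u) l := by
      rw [← integral_neg_eq_self]
      congr 1
      ext u
      rw [hFRe, ← sub_eq_add_neg]
    have hφw : Measurable (fun x => φ x (ωI, w)) :=
      hφm.comp (measurable_id.prodMk measurable_const)
    have hFF : Integrable (fun p : (Fin q → ℝ) × (Fin k → ℝ) => FI p.1 * FR p.2)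
        (νI.prod volume) := hFIi.mul_prod hFRi
    have hbig : Integrable (Function.uncurry fun (x : X) (p : (Fin q → ℝ) × (Fin k → ℝ)) =>
        (FI p.1 * FR p.2) * (φ x p * φ x (ωI, w))) ((μ l).prod (νI.prod volume)) := by
      have h1 := hFF.comp_snd (μ l)
      refine h1.mul_bdd (c := 1) (g := fun z => φ z.1 z.2 * φ z.1 (ωI, w)) ?_ ?_
      · exact (hφm.mul (hφw.comp measurable_fst)).aestronglyMeasurable
      · refine ae_of_all _ fun z => ?_
        rw [Real.norm_eq_abs, abs_mul]
        exact mul_le_one₀ (hφb _ _) (abs_nonneg _) (hφb _ _)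
    have hS1 : S ωI w l = ∫ x, ∫ p : (Fin q → ℝ) × (Fin k → ℝ),
        (FI p.1 * FR p.2) * (φ x p * φ x (ωI, w)) ∂(νI.prod volume) ∂(μ l) := by
      rw [hS]
      congr 1
      ext x
      rw [hf₀, ← integral_mul_const]
      congr 1
      ext p
      ring
    rw [hS1, integral_integral_swap hbig]
    have hS2 : ∀ p : (Fin q → ℝ) × (Fin k → ℝ),
        (∫ x, (FI p.1 * FR p.2) * (φ x p * φ x (ωI, w)) ∂(μ l)) =
        (FI p.1 * HI ωI p.1) * (FR p.2 * HR (w - p.2) l) +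
        (FI p.1 * HI ωI (-p.1)) * (FR p.2 * HR (w + p.2) l) := by
      intro p
      rw [integral_const_mul]
      have := hOrth l hl ωI w p.1 p.2
      simp_rw [mul_comm (φ _ (ωI, w))] at this
      rw [this]
      ring
    simp_rw [hS2]
    rw [integral_add (hint1.mul_prod hm1) (hint2.mul_prod hm2),
      integral_prod_mul (fun a => FI a * HI ωI a) (fun u => FR u * HR (w - u) l),
      integral_prod_mul (fun a => FI a * HI ωI (-a)) (fun u => FR u * HR (w + u) l), heq]
    simp_rw [mul_add]
    rw [integral_add hint1 hint2]
    ring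
  set A := ∫ a, FI a * (HI ωI a + HI ωI (-a)) ∂νI with hAdef
  have hlim : ∀ w, Tendsto (fun l => |S ωI w l| / c l) atTop (nhds (|A| * |FR w|)) := by
    intro w
    have h1 := ((hApprox FR hFRc ⟨CR, hCR⟩ w).const_mul A).abs
    rw [abs_mul] at h1
    refine h1.congr' ?_
    filter_upwards [eventually_gt_atTop 0] with l hl
    rw [hkey w l hl, abs_mul, abs_mul, abs_div, abs_of_pos (hcpos l hl), mul_div_assoc]
  obtain ⟨G, hG, l₀, hl₀, hGb⟩ := hdom
  have hSm : ∀ l, 0 < l → StronglyMeasurable (fun u => S ωI u l) := by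
    intro l hl
    haveI := hμ l hl
    have h1 : StronglyMeasurable (fun z : (Fin k → ℝ) × X => f₀ z.2 * φ z.2 (ωI, z.1)) := by
      apply Measurable.stronglyMeasurable
      exact (hf₀m.measurable.comp measurable_snd).mul
        (hφm.comp (measurable_snd.prodMk (measurable_const.prodMk measurable_fst)))
    have h2 := h1.integral_prod_right' (ν := μ l)
    have h3 : (fun u => S ωI u l) = _ := funext fun u => hS ωI u l
    rw [h3]
    exact h2
  have hintlim : Tendsto (fun l => ∫ u, |S ωI u l| / c l) atTop
      (nhds (∫ u, |A| * |FR u|)) := by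
    refine tendsto_integral_filter_of_dominated_convergence G ?_ ?_ hG (ae_of_all _ hlim)
    · filter_upwards [eventually_gt_atTop 0] with l hl
      exact ((hSm l hl).measurable.abs.div_const _).aestronglyMeasurable
    · filter_upwards [eventually_ge_atTop l₀] with l hl
      refine ae_of_all _ fun u => ?_
      have hcl := hcpos l (hl₀.trans_le hl)
      rw [Real.norm_of_nonneg (by positivity)]
      exact hGb u l hl
  rw [integral_const_mul] at hintlim
  have hApos : 0 < |A| := abs_pos.mpr hA
  intro ωR
  have hfin := (hlim ωR).div hintlim (by positivity)
  rw [mul_div_mul_left _ _ hApos.ne'] at hfin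
  refine hfin.congr' ?_
  filter_upwards [eventually_gt_atTop 0] with l hl
  simp only [Pi.div_apply]
  rw [integral_div, div_div_div_cancel_right₀ (hcpos l hl).ne']
end

section
/- Assume each component x_i ∼ N(0, σ_i²). Fix θ ∈ [0,2π) with cos θ ≠ 0, assume ∫_0^{2π} F_I(θ') cos θ' dθ' ≠ 0, and assume there exist an integrable G : ℝ^d → ℝ and Σ₀ > 0 such that (∏_{i=1}^d σ_i/√(2π)) · |S(θ, u; σ)| ≤ G(u) for all u ∈ ℝ^d whenever min_i σ_i ≥ Σ₀. Then for every w ∈ ℝ^d, |S(θ, w; σ)| / ∫_{ℝ^d} |S(θ, u; σ)| du → |F_R(w)| / ∫_{ℝ^d} |F_R(u)| du as min_i σ_i → ∞ (i.e., for every ε > 0 there exists Σ such that the ratio is within ε of the limit whenever min_i σ_i > Σ). -/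
open MeasureTheory Filter Real ProbabilityTheory

/-- Unnormalised standard Gaussian density. -/
noncomputable def gau {d : ℕ} (v : Fin d → ℝ) : ℝ := ∏ i, Real.exp (-(1/2) * (v i) ^ 2)

lemma gau_cont {d : ℕ} : Continuous (gau (d := d)) := by
  unfold gau; fun_prop

lemma gau_pos {d : ℕ} (v : Fin d → ℝ) : 0 < gau v :=
  Finset.prod_pos fun _ _ => Real.exp_pos _

lemma gau_le_one {d : ℕ} (v : Fin d → ℝ) : gau v ≤ 1 :=
  Finset.prod_le_one (fun _ _ => (Real.exp_pos _).le) fun i _ =>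
    Real.exp_le_one_iff.2 (by nlinarith [sq_nonneg (v i)])

lemma gau_neg {d : ℕ} (v : Fin d → ℝ) : gau (-v) = gau v := by
  simp [gau]

lemma gau_int {d : ℕ} : Integrable (gau (d := d)) := by
  unfold gau
  exact Integrable.fintype_prod (f := fun (_ : Fin d) (x : ℝ) => Real.exp (-(1/2) * x ^ 2))
    (fun _ => integrable_exp_neg_mul_sq (by norm_num))

lemma gau_integral_pos {d : ℕ} : 0 < ∫ v : Fin d → ℝ, gau v := by
  unfold gau
  rw [integral_fintype_prod_volume_eq_prod (fun (_ : Fin d) (x : ℝ) => Real.exp (-(1/2) * x ^ 2))]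
  refine Finset.prod_pos fun _ _ => ?_
  rw [integral_gaussian]
  positivity

/-- Gaussian expectation of a phase-shifted cosine. -/
lemma exp_cos {d : ℕ} (σ v : Fin d → ℝ) (t : ℝ) :
    ∫ x : Fin d → ℝ, Real.cos ((∑ i, v i * x i) + t)
        ∂(Measure.pi fun i => gaussianReal 0 ((σ i) ^ 2).toNNReal) =
      gau (σ * v) * Real.cos t := by
  set μ := Measure.pi fun i => gaussianReal 0 ((σ i) ^ 2).toNNReal
  have h1 : ∫ x : Fin d → ℝ, Complex.exp (((∑ i, v i * x i : ℝ) : ℂ) * Complex.I) ∂μ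
      = (gau (σ * v) : ℂ) := by
    have : ∀ x : Fin d → ℝ, Complex.exp (((∑ i, v i * x i : ℝ) : ℂ) * Complex.I)
        = ∏ i, Complex.exp (v i * x i * Complex.I) := by
      intro x
      rw [← Complex.exp_sum]
      push_cast
      rw [Finset.sum_mul]
    simp_rw [this]
    rw [integral_fintype_prod_eq_prod (fun i (y : ℝ) => Complex.exp (v i * y * Complex.I))]
    simp_rw [← charFun_apply_real, charFun_gaussianReal]
    unfold gau
    push_cast
    refine Finset.prod_congr rfl fun i _ => ?_
    congr 1
    rw [Real.coe_toNNReal _ (sq_nonneg _)]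
    simp
    ring
  have h2 : ∫ x : Fin d → ℝ, Complex.exp ((((∑ i, v i * x i) + t : ℝ) : ℂ) * Complex.I) ∂μ
      = (gau (σ * v) : ℂ) * Complex.exp (t * Complex.I) := by
    rw [← h1, ← integral_mul_const]
    congr 1; ext x
    rw [← Complex.exp_add]; push_cast; ring_nf
  have h3 := congrArg Complex.re h2
  rw [Complex.re_ofReal_mul, Complex.exp_ofReal_mul_I_re] at h3
  rw [← h3]
  have hint : Integrable (fun x : Fin d → ℝ =>
      Complex.exp ((((∑ i, v i * x i) + t : ℝ) : ℂ) * Complex.I)) μ := by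
    refine Integrable.of_bound (Continuous.aestronglyMeasurable (by fun_prop)) 1 ?_
    filter_upwards with x
    rw [Complex.norm_exp_ofReal_mul_I]
  have := integral_re hint
  simp only [RCLike.re_to_complex] at this
  rw [← this]
  simp only [Complex.exp_ofReal_mul_I_re]

lemma FR_cos_int {d : ℕ} {FR : (Fin d → ℝ) → ℝ} (hFRi : Integrable FR) (x : Fin d → ℝ) (t : ℝ) :
    Integrable fun w : Fin d → ℝ => FR w * Real.cos ((∑ i, w i * x i) + t) := by
  refine hFRi.mul_bdd (c := 1) (Continuous.aestronglyMeasurable (by fun_prop)) ?_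
  filter_upwards with w
  simpa using Real.abs_cos_le_one _

lemma inner_even {d : ℕ} {FR : (Fin d → ℝ) → ℝ} (hFRi : Integrable FR)
    (hFRe : ∀ u, FR (-u) = FR u) (x : Fin d → ℝ) (t : ℝ) :
    ∫ w : Fin d → ℝ, FR w * Real.cos ((∑ i, w i * x i) + t) =
      Real.cos t * ∫ w : Fin d → ℝ, FR w * Real.cos (∑ i, w i * x i) := by
  have h : ∫ w : Fin d → ℝ, FR w * Real.cos ((∑ i, w i * x i) + t) =
      ∫ w : Fin d → ℝ, FR w * Real.cos ((∑ i, w i * x i) + (-t)) := by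
    rw [← integral_neg_eq_self]
    congr 1; ext w
    rw [hFRe, ← Real.cos_neg]
    simp [add_comm]
  have h2 : (∫ w : Fin d → ℝ, FR w * Real.cos ((∑ i, w i * x i) + t)) +
      ∫ w : Fin d → ℝ, FR w * Real.cos ((∑ i, w i * x i) + (-t)) =
      2 * (Real.cos t * ∫ w : Fin d → ℝ, FR w * Real.cos (∑ i, w i * x i)) := by
    rw [← integral_add (FR_cos_int hFRi x t) (FR_cos_int hFRi x (-t)),
      ← integral_const_mul, ← integral_const_mul]
    congr 1; ext w
    rw [Real.cos_add, Real.cos_add, Real.cos_neg, Real.sin_neg]; ring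
  linarith

/-- Translation and diagonal rescaling. -/
lemma rescale {d : ℕ} (FR : (Fin d → ℝ) → ℝ) (hFRc : Continuous FR) (σ w : Fin d → ℝ)
    (hσ : ∀ i, 0 < σ i) :
    (∏ i, σ i) * ∫ v : Fin d → ℝ, FR v * gau (σ * (v - w)) =
      ∫ z : Fin d → ℝ, FR (w + σ⁻¹ * z) * gau z := by
  have h1 : ∫ v : Fin d → ℝ, FR v * gau (σ * (v - w)) =
      ∫ v : Fin d → ℝ, FR (w + v) * gau (σ * v) := by
    rw [← integral_add_left_eq_self _ w]
    simp
  have hd : (Matrix.diagonal (σ⁻¹)).det ≠ 0 := by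
    rw [Matrix.det_diagonal]
    exact Finset.prod_ne_zero_iff.2 fun i _ => inv_ne_zero (hσ i).ne'
  have hP : 0 < ∏ i, σ i := Finset.prod_pos fun i _ => hσ i
  have hcont : Continuous fun v : Fin d → ℝ => FR (w + v) * gau (σ * v) := by
    have := gau_cont (d := d)
    fun_prop
  rw [h1]
  conv_lhs => rw [← Real.smul_map_diagonal_volume_pi hd]
  rw [integral_smul_measure, integral_map]
  · have : ∀ z : Fin d → ℝ, (Matrix.toLin' (Matrix.diagonal σ⁻¹)) z = σ⁻¹ * z := by
      intro z; ext i; simp [Matrix.mulVec_diagonal]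
    simp_rw [this]
    have h3 : ∀ z : Fin d → ℝ, σ * (σ⁻¹ * z) = z := by
      intro z; ext i; simp [(hσ i).ne']
    simp_rw [h3]
    rw [ENNReal.toReal_ofReal (abs_nonneg _), Matrix.det_diagonal]
    have : ∏ i, σ⁻¹ i = (∏ i, σ i)⁻¹ := by simp
    rw [this, abs_of_pos (inv_pos.2 hP), smul_eq_mul, ← mul_assoc, mul_inv_cancel₀ hP.ne', one_mul]
  · exact (LinearMap.continuous_on_pi _).aemeasurable
  · exact hcont.aestronglyMeasurable

lemma S_formula {d : ℕ} (FR : (Fin d → ℝ) → ℝ) (hFRi : Integrable FR)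
    (hFRe : ∀ u, FR (-u) = FR u) (σ w : Fin d → ℝ) (θ : ℝ) :
    ∫ x : Fin d → ℝ, (∫ v : Fin d → ℝ, FR v * Real.cos (∑ i, v i * x i)) *
        Real.cos ((∑ i, w i * x i) + θ)
        ∂(Measure.pi fun i => gaussianReal 0 ((σ i) ^ 2).toNNReal) =
      Real.cos θ * ∫ v : Fin d → ℝ, FR v * gau (σ * (v - w)) := by
  set μ := Measure.pi fun i => gaussianReal 0 ((σ i) ^ 2).toNNReal
  simp_rw [← integral_mul_const]
  rw [integral_integral_swap]
  swap
  · have h0 : Integrable (fun p : (Fin d → ℝ) × (Fin d → ℝ) => FR p.2) (μ.prod volume) :=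
      hFRi.comp_snd μ
    have := h0.mul_bdd (c := 1) (g := fun p : (Fin d → ℝ) × (Fin d → ℝ) =>
      Real.cos (∑ i, p.2 i * p.1 i) * Real.cos ((∑ i, w i * p.1 i) + θ))
      (Continuous.aestronglyMeasurable (by fun_prop)) (by
        filter_upwards with p
        rw [norm_mul]
        exact mul_le_one₀ (Real.abs_cos_le_one _) (norm_nonneg _) (Real.abs_cos_le_one _))
    refine this.congr ?_
    filter_upwards with p
    simp [Function.uncurry, mul_assoc]
  have hin : ∀ (v : Fin d → ℝ) (t : ℝ), Integrable (fun x : Fin d → ℝ => Real.cos ((∑ i, v i * x i) + t)) μ := by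
    intro v t
    refine Integrable.of_bound (Continuous.aestronglyMeasurable (by fun_prop)) 1 ?_
    filter_upwards with x
    exact Real.abs_cos_le_one _
  have h1 : ∀ v : Fin d → ℝ, ∫ x : Fin d → ℝ, FR v * Real.cos (∑ i, v i * x i) *
        Real.cos ((∑ i, w i * x i) + θ) ∂μ =
      (Real.cos θ / 2) * (FR v * gau (σ * (v + w)) + FR v * gau (σ * (v - w))) := by
    intro v
    have : ∀ x : Fin d → ℝ, FR v * Real.cos (∑ i, v i * x i) *
        Real.cos ((∑ i, w i * x i) + θ) = FR v / 2 *
        (Real.cos ((∑ i, (v + w) i * x i) + θ) + Real.cos ((∑ i, (v - w) i * x i) + (-θ))) := by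
      intro x
      simp only [Pi.add_apply, Pi.sub_apply, add_mul, sub_mul, Finset.sum_add_distrib,
        Finset.sum_sub_distrib]
      generalize ∑ i, v i * x i = a
      generalize ∑ i, w i * x i = b
      rw [show a + b + θ = a + (b + θ) by ring, show a - b + -θ = a - (b + θ) by ring,
        Real.cos_add a, Real.cos_sub a]
      ring
    simp_rw [this]
    rw [integral_const_mul, integral_add (hin _ _) (hin _ _), exp_cos, exp_cos, Real.cos_neg]
    ring
  simp_rw [h1]
  have hi : ∀ u : Fin d → ℝ, Integrable fun v => FR v * gau (σ * (v - u)) := by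
    intro u
    refine hFRi.mul_bdd (c := 1) (Continuous.aestronglyMeasurable ?_) ?_
    · have := gau_cont (d := d)
      fun_prop
    filter_upwards with v
    rw [Real.norm_eq_abs, abs_of_pos (gau_pos _)]
    exact gau_le_one _
  have hi' : Integrable fun v => FR v * gau (σ * (v + w)) := by
    simpa using hi (-w)
  have h2 : ∫ v : Fin d → ℝ, FR v * gau (σ * (v + w)) =
      ∫ v : Fin d → ℝ, FR v * gau (σ * (v - w)) := by
    rw [← integral_neg_eq_self]
    congr 1; ext v
    rw [hFRe, ← gau_neg]
    congr 2
    ring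
  rw [integral_const_mul, integral_add hi' (hi w), h2]
  ring

/-- Gaussian inputs — the normalized score ratio recovers the spectrum ratio
as all the standard deviations tend to infinity. -/
theorem score_ratio_recovers_spectrum_gaussian
    (d : ℕ)
    (FI : ℝ → ℝ) (hFIc : Continuous FI) (hFIb : ∃ C, ∀ t, |FI t| ≤ C)
    (hFIi : Integrable FI) (hFIsupp : Function.support FI ⊆ Set.Ico 0 (2 * π))
    (FR : (Fin d → ℝ) → ℝ) (hFRc : Continuous FR) (hFRb : ∃ C, ∀ u, |FR u| ≤ C)
    (hFRi : Integrable FR) (hFRe : ∀ u, FR (-u) = FR u)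
    (hFRpos : 0 < ∫ u, |FR u|)
    (f₀ : (Fin d → ℝ) → ℝ)
    (hf₀ : ∀ x, f₀ x = ∫ θ' in (0:ℝ)..(2 * π), ∫ w' : Fin d → ℝ,
        FI θ' * FR w' * Real.cos ((∑ i, w' i * x i) + θ'))
    (S : ℝ → (Fin d → ℝ) → (Fin d → ℝ) → ℝ)
    (hS : ∀ θ w σ, S θ w σ =
      ∫ x : Fin d → ℝ, f₀ x * Real.cos ((∑ i, w i * x i) + θ)
        ∂(Measure.pi fun i => gaussianReal 0 ((σ i) ^ 2).toNNReal))
    (θ : ℝ) (hθ : θ ∈ Set.Ico 0 (2 * π)) (hcosθ : Real.cos θ ≠ 0)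
    (hFIcos : (∫ t in (0:ℝ)..(2 * π), FI t * Real.cos t) ≠ 0)
    (hdom : ∃ G : (Fin d → ℝ) → ℝ, Integrable G ∧ ∃ T₀ > (0 : ℝ),
      ∀ σ : Fin d → ℝ, (∀ i, T₀ ≤ σ i) → ∀ u : Fin d → ℝ,
        (∏ i, σ i / Real.sqrt (2 * π)) * |S θ u σ| ≤ G u) :
    ∀ w : Fin d → ℝ, ∀ ε > (0 : ℝ), ∃ T : ℝ,
      ∀ σ : Fin d → ℝ, (∀ i, 0 < σ i) → (∀ i, T < σ i) →
        |(|S θ w σ|) / (∫ u, |S θ u σ|) - |FR w| / (∫ u, |FR u|)| < ε := by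
  obtain ⟨C, hC⟩ := hFRb
  obtain ⟨G, hG, T₀, hT₀, hdom⟩ := hdom
  set A := ∫ t in (0:ℝ)..(2 * π), FI t * Real.cos t with hA
  have hf : ∀ x, f₀ x = A * ∫ v : Fin d → ℝ, FR v * Real.cos (∑ i, v i * x i) := by
    intro x
    rw [hf₀, hA, ← intervalIntegral.integral_mul_const]
    congr 1; ext t
    simp_rw [mul_assoc]
    rw [integral_const_mul, inner_even hFRi hFRe]
  have hSf : ∀ (w σ : Fin d → ℝ), S θ w σ =
      A * Real.cos θ * ∫ v : Fin d → ℝ, FR v * gau (σ * (v - w)) := by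
    intro w σ
    rw [hS]
    simp_rw [hf, mul_assoc A]
    rw [integral_const_mul, S_formula FR hFRi hFRe]
  set s := ∏ _i : Fin d, Real.sqrt (2 * π) with hs
  have hspos : 0 < s := Finset.prod_pos fun _ _ => by positivity
  set c : (Fin d → ℝ) → ℝ := fun σ => ∏ i, σ i / Real.sqrt (2 * π) with hc
  have hcS : ∀ (w σ : Fin d → ℝ), (∀ i, 0 < σ i) → c σ * |S θ w σ| =
      |A * Real.cos θ / s * ∫ z : Fin d → ℝ, FR (w + σ⁻¹ * z) * gau z| := by
    intro w σ hσ
    rw [← rescale FR hFRc σ w hσ, hSf]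
    have hcp : 0 < c σ := Finset.prod_pos fun i _ => div_pos (hσ i) (by positivity)
    rw [← abs_of_pos hcp, ← abs_mul]
    congr 1
    simp only [hc, hs, Finset.prod_div_distrib]
    ring
  set K := ∫ v : Fin d → ℝ, gau v with hK
  have hKpos : 0 < K := gau_integral_pos
  set B := |A * Real.cos θ / s| * K with hB
  have hBpos : 0 < B :=
    mul_pos (abs_pos.2 (div_ne_zero (mul_ne_zero hFIcos hcosθ) hspos.ne')) hKpos
  set l : Filter (Fin d → ℝ) := Filter.pi fun _ => atTop with hl
  have hlgt : ∀ T : ℝ, ∀ᶠ σ in l, ∀ i, T < σ i := by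
    intro T
    rw [eventually_all]
    intro i
    exact (tendsto_eval_pi (fun _ : Fin d => (atTop : Filter ℝ)) i).eventually
      (eventually_gt_atTop T)
  have hbd : ∀ u z : Fin d → ℝ, ‖FR u * gau z‖ ≤ C * gau z := by
    intro u z
    rw [norm_mul, Real.norm_eq_abs, Real.norm_eq_abs, abs_of_pos (gau_pos z)]
    exact mul_le_mul_of_nonneg_right (hC u) (gau_pos z).le
  have hgc := gau_cont (d := d)
  have hlim : ∀ w : Fin d → ℝ, Tendsto (fun σ => c σ * |S θ w σ|) l (nhds (B * |FR w|)) := by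
    intro w
    have h1 : Tendsto (fun σ : Fin d → ℝ => ∫ z : Fin d → ℝ, FR (w + σ⁻¹ * z) * gau z) l
        (nhds (∫ z : Fin d → ℝ, FR w * gau z)) := by
      refine tendsto_integral_filter_of_dominated_convergence (fun z => C * gau z) ?_ ?_
        (gau_int.const_mul C) ?_
      · filter_upwards with σ
        exact Continuous.aestronglyMeasurable (by fun_prop)
      · filter_upwards with σ
        filter_upwards with z
        exact hbd _ _
      · filter_upwards with z
        refine Tendsto.mul_const _ ((hFRc.tendsto w).comp ?_)
        rw [tendsto_pi_nhds]
        intro i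
        have h2 : Tendsto (fun σ : Fin d → ℝ => (σ i)⁻¹) l (nhds 0) :=
          tendsto_inv_atTop_zero.comp (tendsto_eval_pi (fun _ : Fin d => (atTop : Filter ℝ)) i)
        simpa using (h2.mul_const (z i)).const_add (w i)
    rw [integral_const_mul] at h1
    have h2 := (h1.const_mul (A * Real.cos θ / s)).abs
    have h3 : |A * Real.cos θ / s * (FR w * ∫ z : Fin d → ℝ, gau z)| = B * |FR w| := by
      rw [← hK, hB, abs_mul, abs_mul, abs_of_pos hKpos]; ring
    rw [h3] at h2
    refine h2.congr' ?_
    filter_upwards [hlgt 0] with σ hσ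
    rw [hcS w σ hσ]
  have hlimI : Tendsto (fun σ => ∫ u, c σ * |S θ u σ|) l (nhds (∫ u, B * |FR u|)) := by
    refine tendsto_integral_filter_of_dominated_convergence G ?_ ?_ hG ?_
    · filter_upwards [hlgt 0] with σ hσ
      simp_rw [fun u => hcS u σ hσ]
      have : Continuous fun u : Fin d → ℝ => ∫ z : Fin d → ℝ, FR (u + σ⁻¹ * z) * gau z := by
        refine continuous_of_dominated (bound := fun z => C * gau z) ?_ ?_
          (gau_int.const_mul C) ?_
        · intro u
          exact Continuous.aestronglyMeasurable (by fun_prop)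
        · intro u
          filter_upwards with z
          exact hbd _ _
        · filter_upwards with z
          fun_prop
      exact (this.const_mul _).abs.aestronglyMeasurable
    · filter_upwards [hlgt T₀] with σ hσ
      filter_upwards with u
      have hcp : 0 < c σ := Finset.prod_pos fun i _ =>
        div_pos (hT₀.trans (hσ i)) (by positivity)
      rw [Real.norm_eq_abs, abs_of_nonneg (mul_nonneg hcp.le (abs_nonneg _))]
      exact hdom σ (fun i => (hσ i).le) u
    · filter_upwards with u
      exact hlim u
  intro w ε hε
  have hI : (∫ u, B * |FR u|) = B * ∫ u, |FR u| := integral_const_mul _ _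
  rw [hI] at hlimI
  have hR : Tendsto (fun σ => |S θ w σ| / ∫ u, |S θ u σ|) l
      (nhds (|FR w| / ∫ u, |FR u|)) := by
    have h := (hlim w).div hlimI (mul_pos hBpos hFRpos).ne'
    rw [mul_div_mul_left _ _ hBpos.ne'] at h
    refine h.congr' ?_
    filter_upwards [hlgt 0] with σ hσ
    have hcp : 0 < c σ := Finset.prod_pos fun i _ => div_pos (hσ i) (by positivity)
    simp only [Pi.div_apply]
    rw [integral_const_mul, mul_div_mul_left _ _ hcp.ne']
  have hev := hR.eventually (Metric.ball_mem_nhds _ hε)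
  have hbasis : l.HasBasis (fun p : Set (Fin d) × (Fin d → ℝ) => p.1.Finite ∧ ∀ i ∈ p.1, True)
      (fun p => p.1.pi fun i => Set.Ioi (p.2 i)) :=
    Filter.hasBasis_pi fun _ => atTop_basis_Ioi
  obtain ⟨⟨I, a⟩, -, hIa⟩ := hbasis.eventually_iff.1 hev
  refine ⟨∑ i, |a i|, fun σ _ hσT => ?_⟩
  have := hIa (x := σ) (fun i _ => lt_of_le_of_lt
    ((le_abs_self _).trans (Finset.single_le_sum (f := fun i => |a i|)
      (fun _ _ => abs_nonneg _) (Finset.mem_univ i))) (hσT i))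
  rwa [Real.dist_eq] at this
end

section
/- Assume each component x_i ∼ Laplace(0, σ_i), i.e., x_i has density t ↦ (1/(2σ_i)) exp(−|t|/σ_i). Fix θ ∈ [0,2π) with cos θ ≠ 0, assume ∫_0^{2π} F_I(θ') cos θ' dθ' ≠ 0, and assume there exist an integrable G : ℝ^d → ℝ and Σ₀ > 0 such that (∏_{i=1}^d σ_i/π) · |S(θ, u; σ)| ≤ G(u) for all u ∈ ℝ^d whenever min_i σ_i ≥ Σ₀. Then for every w ∈ ℝ^d, |S(θ, w; σ)| / ∫_{ℝ^d} |S(θ, u; σ)| du → |F_R(w)| / ∫_{ℝ^d} |F_R(u)| du as min_i σ_i → ∞ (i.e., for every ε > 0 there exists Σ such that the ratio is within ε of the limit whenever min_i σ_i > Σ). -/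
open MeasureTheory Filter Real

lemma lap1_aux (s : ℝ) (hs : 0 < s) (v : ℝ) :
    Integrable (fun x : ℝ => (((1 / (2 * s)) * Real.exp (-|x| / s) : ℝ) : ℂ) *
      Complex.exp (Complex.I * (v * x : ℝ))) ∧
    ∫ x : ℝ, (((1 / (2 * s)) * Real.exp (-|x| / s) : ℝ) : ℂ) *
      Complex.exp (Complex.I * (v * x : ℝ)) = (((1 + (s * v) ^ 2)⁻¹ : ℝ) : ℂ) := by
  set F : ℝ → ℂ := fun x : ℝ => (((1 / (2 * s)) * Real.exp (-|x| / s) : ℝ) : ℂ) *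
      Complex.exp (Complex.I * (v * x : ℝ)) with hF
  set a : ℂ := (s⁻¹ : ℝ) + Complex.I * v with ha
  set b : ℂ := -(s⁻¹ : ℝ) + Complex.I * v with hb
  have har : 0 < a.re := by simp [ha, hs]
  have hbr : b.re < 0 := by simp [hb, hs]
  have e1 : Set.EqOn F (fun x : ℝ => ((1 / (2 * s) : ℝ) : ℂ) * Complex.exp (a * x)) (Set.Iic 0) := by
    intro x hx
    simp only [hF, ha]
    rw [abs_of_nonpos hx]
    push_cast
    rw [mul_assoc, ← Complex.exp_add]
    congr 2
    ring
  have e2 : Set.EqOn F (fun x : ℝ => ((1 / (2 * s) : ℝ) : ℂ) * Complex.exp (b * x)) (Set.Ioi 0) := by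
    intro x hx
    simp only [hF, hb]
    rw [abs_of_pos hx]
    push_cast
    rw [mul_assoc, ← Complex.exp_add]
    congr 2
    ring
  have i1 : IntegrableOn F (Set.Iic 0) :=
    (IntegrableOn.congr_fun ((integrableOn_exp_mul_complex_Iic har 0).const_mul _) e1.symm
      measurableSet_Iic)
  have i2 : IntegrableOn F (Set.Ioi 0) :=
    (IntegrableOn.congr_fun ((integrableOn_exp_mul_complex_Ioi hbr 0).const_mul _) e2.symm
      measurableSet_Ioi)
  refine ⟨?_, ?_⟩
  · rw [← integrableOn_univ, ← Set.Iic_union_Ioi (a := (0:ℝ))]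
    exact i1.union i2
  · rw [← intervalIntegral.integral_Iic_add_Ioi i1 i2, setIntegral_congr_fun measurableSet_Iic e1,
      setIntegral_congr_fun measurableSet_Ioi e2, integral_const_mul, integral_const_mul,
      integral_exp_mul_complex_Iic har, integral_exp_mul_complex_Ioi hbr]
    have ha0 : a ≠ 0 := by intro h; simp [h] at har
    have hb0 : b ≠ 0 := by intro h; simp [h] at hbr
    have hs0 : (s : ℂ) ≠ 0 := by exact_mod_cast hs.ne'
    have hr : (1 + ((s:ℂ) * v) ^ 2) ≠ 0 := by
      have : (1 + (s * v) ^ 2 : ℝ) ≠ 0 := by positivity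
      exact_mod_cast this
    have hab : a * b * s^2 = -(1 + ((s:ℂ) * v) ^ 2) := by
      simp only [ha, hb]; push_cast; field_simp; ring_nf; simp; ring
    have hba : b - a = -2 / s := by
      simp only [ha, hb]; push_cast; field_simp; ring
    have h3 : (1 + ((s:ℂ) * v) ^ 2) = -(a * b * s^2) := by rw [hab]; ring
    push_cast
    rw [h3]
    simp only [mul_zero, Complex.exp_zero]
    have : (1:ℂ) / a + -1 / b = (b - a) / (a * b) := by field_simp; ring
    rw [← mul_add, this, hba]
    field_simp

lemma lapd_aux (d : ℕ) (σ : Fin d → ℝ) (hσ : ∀ i, 0 < σ i) :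
    Integrable (fun x : Fin d → ℝ => ∏ i, (1 / (2 * σ i)) * Real.exp (-|x i| / σ i)) := by
  refine Integrable.fintype_prod (f := fun i (x : ℝ) => (1 / (2 * σ i)) * Real.exp (-|x| / σ i))
    fun i => ?_
  refine (lap1_aux (σ i) (hσ i) 0).1.re.congr (Eventually.of_forall fun x => ?_)
  simp only [zero_mul, Complex.ofReal_zero, mul_zero, Complex.exp_zero, mul_one,
    RCLike.re_to_complex, Complex.ofReal_re]

lemma lapd_cos_aux (d : ℕ) (σ : Fin d → ℝ) (hσ : ∀ i, 0 < σ i) (v : Fin d → ℝ) (t : ℝ) :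
    ∫ x : Fin d → ℝ, (∏ i, (1 / (2 * σ i)) * Real.exp (-|x i| / σ i)) *
      Real.cos ((∑ i, v i * x i) + t) = Real.cos t * ∏ i, (1 + (σ i * v i) ^ 2)⁻¹ := by
  set F : Fin d → ℝ → ℂ := fun i (x : ℝ) => (((1 / (2 * σ i)) * Real.exp (-|x| / σ i) : ℝ) : ℂ) *
      Complex.exp (Complex.I * (v i * x : ℝ)) with hF
  have h1 : ∫ x : Fin d → ℝ, ∏ i, F i (x i) = ((∏ i, (1 + (σ i * v i) ^ 2)⁻¹ : ℝ) : ℂ) := by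
    rw [integral_fintype_prod_volume_eq_prod]
    rw [Complex.ofReal_prod]
    exact Finset.prod_congr rfl fun i _ => (lap1_aux (σ i) (hσ i) (v i)).2
  have h2 : Integrable (fun x : Fin d → ℝ => ∏ i, F i (x i)) :=
    Integrable.fintype_prod fun i => (lap1_aux (σ i) (hσ i) (v i)).1
  have h3 : ∀ x : Fin d → ℝ, (∏ i, (1 / (2 * σ i)) * Real.exp (-|x i| / σ i)) *
      Real.cos ((∑ i, v i * x i) + t)
      = RCLike.re (Complex.exp (Complex.I * t) * ∏ i, F i (x i)) := by
    intro x
    have : Complex.exp (Complex.I * t) * ∏ i, F i (x i) =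
      ((∏ i, (1 / (2 * σ i)) * Real.exp (-|x i| / σ i) : ℝ) : ℂ) *
        Complex.exp ((((∑ i, v i * x i) + t : ℝ) : ℂ) * Complex.I) := by
      simp only [hF]
      rw [Finset.prod_mul_distrib, ← Complex.exp_sum, ← Complex.ofReal_prod, mul_left_comm,
        ← Complex.exp_add]
      congr 2
      rw [← Finset.mul_sum]
      push_cast
      ring
    rw [this]
    simp only [RCLike.re_to_complex, Complex.re_ofReal_mul, Complex.exp_ofReal_mul_I_re]
  simp_rw [h3]
  rw [integral_re (h2.const_mul _), integral_const_mul, h1, RCLike.re_to_complex, mul_comm,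
    Complex.re_ofReal_mul, mul_comm Complex.I, Complex.exp_ofReal_mul_I_re, mul_comm]

lemma scale_aux (d : ℕ) (σ : Fin d → ℝ) (hσ : ∀ i, 0 < σ i) (h : (Fin d → ℝ) → ℝ)
    (hc : Continuous h) :
    ∫ y : Fin d → ℝ, h y = (∏ i, σ i) * ∫ y : Fin d → ℝ, h (fun i => σ i * y i) := by
  have hp : 0 < ∏ i, σ i := Finset.prod_pos fun i _ => hσ i
  have hm := Real.smul_map_diagonal_volume_pi (D := σ) (by rw [Matrix.det_diagonal]; exact hp.ne')
  conv_lhs => rw [← hm]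
  rw [integral_smul_measure, integral_map, Matrix.det_diagonal, ENNReal.toReal_ofReal (abs_nonneg _),
    abs_of_pos hp, smul_eq_mul]
  · congr 1
    refine integral_congr_ae (Eventually.of_forall fun y => ?_)
    simp only [Matrix.toLin'_apply]
    congr 1
    ext i
    simp [Matrix.mulVec_diagonal]
  · exact (LinearMap.continuous_of_finiteDimensional _).aemeasurable
  · exact hc.aestronglyMeasurable

lemma f0_aux (d : ℕ) (FI : ℝ → ℝ) (hFIc : Continuous FI)
    (FR : (Fin d → ℝ) → ℝ) 
    (hFRi : Integrable FR) (hFRe : ∀ u, FR (-u) = FR u) (x : Fin d → ℝ) :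
    (∫ θ' in (0:ℝ)..(2 * π), ∫ w' : Fin d → ℝ,
        FI θ' * FR w' * Real.cos ((∑ i, w' i * x i) + θ'))
     = (∫ t in (0:ℝ)..(2 * π), FI t * Real.cos t) *
        ∫ w' : Fin d → ℝ, FR w' * Real.cos (∑ i, w' i * x i) := by
  have ic : Integrable (fun w' : Fin d → ℝ => FR w' * Real.cos (∑ i, w' i * x i)) :=
    hFRi.mul_bdd (c := 1) (Continuous.aestronglyMeasurable (by fun_prop)) (Eventually.of_forall fun w => Real.abs_cos_le_one _)
  have is : Integrable (fun w' : Fin d → ℝ => FR w' * Real.sin (∑ i, w' i * x i)) :=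
    hFRi.mul_bdd (c := 1) (Continuous.aestronglyMeasurable (by fun_prop)) (Eventually.of_forall fun w => Real.abs_sin_le_one _)
  have hs0 : ∫ w' : Fin d → ℝ, FR w' * Real.sin (∑ i, w' i * x i) = 0 := by
    have h := integral_neg_eq_self (fun w' : Fin d → ℝ => FR w' * Real.sin (∑ i, w' i * x i)) volume
    simp only [hFRe, Pi.neg_apply, neg_mul, Finset.sum_neg_distrib, Real.sin_neg, mul_neg,
      integral_neg] at h
    linarith
  rw [← intervalIntegral.integral_mul_const]
  refine intervalIntegral.integral_congr fun t _ => ?_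
  have : ∀ w' : Fin d → ℝ, FI t * FR w' * Real.cos ((∑ i, w' i * x i) + t) =
      FI t * Real.cos t * (FR w' * Real.cos (∑ i, w' i * x i)) -
      FI t * Real.sin t * (FR w' * Real.sin (∑ i, w' i * x i)) := by
    intro w'
    rw [Real.cos_add]; ring
  simp_rw [this]
  rw [integral_sub (ic.const_mul _) (is.const_mul _), integral_const_mul, integral_const_mul, hs0]
  ring

lemma S_aux (d : ℕ) (FR : (Fin d → ℝ) → ℝ) (hFRc : Continuous FR)
    (hFRi : Integrable FR) (hFRe : ∀ u, FR (-u) = FR u) (σ : Fin d → ℝ) (hσ : ∀ i, 0 < σ i)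
    (w : Fin d → ℝ) (θ : ℝ) :
    (∏ i, σ i / π) * ∫ x : Fin d → ℝ,
        (∏ i, (1 / (2 * σ i)) * Real.exp (-|x i| / σ i)) *
          ((∫ w' : Fin d → ℝ, FR w' * Real.cos (∑ i, w' i * x i)) *
            Real.cos ((∑ i, w i * x i) + θ))
      = Real.cos θ * ∫ y : Fin d → ℝ, FR (fun i => w i + y i / σ i) * ∏ i, (π * (1 + y i ^ 2))⁻¹ := by
  set P : (Fin d → ℝ) → ℝ := fun x => ∏ i, (1 / (2 * σ i)) * Real.exp (-|x i| / σ i) with hP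
  set Φ : (Fin d → ℝ) → ℝ := fun v => ∏ i, (1 + (σ i * v i) ^ 2)⁻¹ with hΦ
  have hPi : Integrable P := lapd_aux d σ hσ
  have hPcos : ∀ (v : Fin d → ℝ) (t : ℝ), ∫ x : Fin d → ℝ, P x * Real.cos ((∑ i, v i * x i) + t) =
    Real.cos t * Φ v := lapd_cos_aux d σ hσ
  have hPc : ∀ (v : Fin d → ℝ) (t : ℝ), 
      Integrable (fun x : Fin d → ℝ => P x * Real.cos ((∑ i, v i * x i) + t)) := fun v t =>
    hPi.mul_bdd (c := 1) (Continuous.aestronglyMeasurable (by fun_prop)) (Eventually.of_forall fun w => Real.abs_cos_le_one _)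
  have hΦc : Continuous Φ := by
    simp only [hΦ]
    refine continuous_finsetProd _ fun i _ => Continuous.inv₀ (by fun_prop) fun v => by positivity
  have hΦ1 : ∀ v, ‖Φ v‖ ≤ 1 := by
    intro v
    simp only [hΦ, Real.norm_eq_abs, Finset.abs_prod]
    refine Finset.prod_le_one (fun i _ => abs_nonneg _) fun i _ => ?_
    rw [abs_of_nonneg (by positivity)]
    exact inv_le_one_of_one_le₀ (by nlinarith [sq_nonneg (σ i * v i)])
  have hΦe : ∀ v, Φ (-v) = Φ v := by intro v; simp [hΦ]
  have h1 : ∫ x : Fin d → ℝ, P x * ((∫ w' : Fin d → ℝ, FR w' * Real.cos (∑ i, w' i * x i)) *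
            Real.cos ((∑ i, w i * x i) + θ)) =
      ∫ x : Fin d → ℝ, ∫ w' : Fin d → ℝ, P x * FR w' * (Real.cos (∑ i, w' i * x i) *
            Real.cos ((∑ i, w i * x i) + θ)) := by
    congr 1
    ext x
    rw [← integral_mul_const, ← integral_const_mul]
    congr 1
    ext w'
    ring
  have h2 : ∀ w' : Fin d → ℝ, ∫ x : Fin d → ℝ, P x * FR w' * (Real.cos (∑ i, w' i * x i) *
            Real.cos ((∑ i, w i * x i) + θ)) =
      Real.cos θ / 2 * (FR w' * Φ (w + w')) + Real.cos θ / 2 * (FR w' * Φ (w - w')) := by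
    intro w'
    have : ∀ x : Fin d → ℝ, P x * FR w' * (Real.cos (∑ i, w' i * x i) *
            Real.cos ((∑ i, w i * x i) + θ)) =
        FR w' / 2 * (P x * Real.cos ((∑ i, (w + w') i * x i) + θ)) +
        FR w' / 2 * (P x * Real.cos ((∑ i, (w - w') i * x i) + θ)) := by
      intro x
      simp only [Pi.add_apply, Pi.sub_apply, add_mul, sub_mul, Finset.sum_add_distrib,
        Finset.sum_sub_distrib]
      rw [show (∑ i, w i * x i) + (∑ i, w' i * x i) + θ =
          ((∑ i, w i * x i) + θ) + (∑ i, w' i * x i) by ring,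
        show (∑ i, w i * x i) - (∑ i, w' i * x i) + θ =
          ((∑ i, w i * x i) + θ) - (∑ i, w' i * x i) by ring, Real.cos_add _ (∑ i, w' i * x i),
          Real.cos_sub _ (∑ i, w' i * x i)]
      ring
    simp_rw [this]
    rw [integral_add ((hPc _ _).const_mul _) ((hPc _ _).const_mul _), integral_const_mul,
      integral_const_mul, hPcos, hPcos]
    ring
  have hi1 : Integrable (fun w' => FR w' * Φ (w + w')) :=
    hFRi.mul_bdd (c := 1) (Continuous.aestronglyMeasurable (by fun_prop)) (Eventually.of_forall fun w => hΦ1 _)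
  have hi2 : Integrable (fun w' => FR w' * Φ (w - w')) :=
    hFRi.mul_bdd (c := 1) (Continuous.aestronglyMeasurable (by fun_prop)) (Eventually.of_forall fun w => hΦ1 _)
  have h3 : ∫ w', FR w' * Φ (w + w') = ∫ w', FR w' * Φ (w - w') := by
    rw [← integral_neg_eq_self (fun w' => FR w' * Φ (w + w'))]
    simp only [hFRe, sub_eq_add_neg]
  rw [h1, integral_integral_swap]
  · simp_rw [h2]
    rw [integral_add (hi1.const_mul _) (hi2.const_mul _), integral_const_mul, integral_const_mul, h3,
      scale_aux d σ hσ (fun y : Fin d → ℝ => FR (fun i => w i + y i / σ i) * ∏ i, (π * (1 + y i ^ 2))⁻¹)]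
    · rw [← integral_add_left_eq_self (fun w' => FR w' * Φ (w - w')) w]
      have : ∀ y : Fin d → ℝ, FR (fun i => w i + σ i * y i / σ i) * ∏ i, (π * (1 + (σ i * y i) ^ 2))⁻¹
          = (∏ _i : Fin d, π⁻¹) * (FR (w + y) * Φ (w - (w + y))) := by
        intro y
        have e : (fun i => w i + σ i * y i / σ i) = w + y := by
          ext i
          have := (hσ i).ne'
          simp only [Pi.add_apply]
          field_simp
        rw [e, sub_add_cancel_left, hΦe]
        simp only [hΦ, mul_inv, Finset.prod_mul_distrib]
        ring
      simp_rw [this]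
      rw [integral_const_mul]
      simp only [div_eq_mul_inv, Finset.prod_mul_distrib]
      ring
    · refine Continuous.mul (by fun_prop) (continuous_finsetProd _ fun i _ =>
        Continuous.inv₀ (by fun_prop) fun v => by positivity)
  · refine (hPi.mul_prod hFRi).mul_bdd (c := 1)
      (g := fun z : (Fin d → ℝ) × (Fin d → ℝ) => Real.cos (∑ i, z.2 i * z.1 i) *
            Real.cos ((∑ i, w i * z.1 i) + θ)) ?_ (Eventually.of_forall fun z => ?_)
    · exact Continuous.aestronglyMeasurable (by fun_prop)
    · rw [norm_mul]
      exact mul_le_one₀ (Real.abs_cos_le_one _) (norm_nonneg _) (Real.abs_cos_le_one _)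

lemma lim_aux (d : ℕ) (FR : (Fin d → ℝ) → ℝ) (hFRc : Continuous FR) (hFRb : ∃ C, ∀ u, |FR u| ≤ C)
    (w : Fin d → ℝ) :
    Tendsto (fun σ : Fin d → ℝ => ∫ y : Fin d → ℝ,
      FR (fun i => w i + y i / σ i) * ∏ i, (π * (1 + y i ^ 2))⁻¹)
      (Filter.pi fun _ => atTop) (nhds (FR w)) := by
  obtain ⟨C, hC⟩ := hFRb
  have hk : Integrable (fun y : Fin d → ℝ => ∏ i, (π * (1 + y i ^ 2))⁻¹) := by
    refine Integrable.fintype_prod (f := fun i (x : ℝ) => (π * (1 + x ^ 2))⁻¹) fun i => ?_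
    simp only [mul_inv]
    exact integrable_inv_one_add_sq.const_mul _
  have hk1 : ∫ y : Fin d → ℝ, ∏ i, (π * (1 + y i ^ 2))⁻¹ = 1 := by
    rw [integral_fintype_prod_volume_eq_prod (fun (i : Fin d) (x : ℝ) => (π * (1 + x ^ 2))⁻¹)]
    simp only [mul_inv]
    rw [integral_const_mul, integral_univ_inv_one_add_sq, inv_mul_cancel₀ Real.pi_pos.ne']
    simp
  have : FR w = ∫ y : Fin d → ℝ, FR w * ∏ i, (π * (1 + y i ^ 2))⁻¹ := by
    rw [integral_const_mul, hk1, mul_one]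
  rw [this]
  refine tendsto_integral_filter_of_dominated_convergence
    (fun y : Fin d → ℝ => C * ∏ i, (π * (1 + y i ^ 2))⁻¹) ?_ ?_ (hk.const_mul C) ?_
  · exact Eventually.of_forall fun σ =>
      (Continuous.aestronglyMeasurable (by fun_prop)).mul hk.aestronglyMeasurable
  · refine Eventually.of_forall fun σ => Eventually.of_forall fun y => ?_
    have : 0 ≤ ∏ i, (π * (1 + y i ^ 2))⁻¹ := Finset.prod_nonneg fun i _ => by positivity
    rw [norm_mul, Real.norm_of_nonneg this]
    exact mul_le_mul_of_nonneg_right (hC _) this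
  · refine Eventually.of_forall fun y => Tendsto.mul_const _ ?_
    refine (hFRc.tendsto w).comp (tendsto_pi_nhds.2 fun i => ?_)
    have h : Tendsto (fun σ : Fin d → ℝ => σ i) (Filter.pi fun _ => atTop) atTop :=
      tendsto_eval_pi _ i
    simpa using (h.const_div_atTop (y i)).const_add (w i)

lemma meas_aux (d : ℕ) (FR : (Fin d → ℝ) → ℝ) (hFRc : Continuous FR) (σ : Fin d → ℝ) :
    StronglyMeasurable (fun w : Fin d → ℝ => ∫ y : Fin d → ℝ,
      FR (fun i => w i + y i / σ i) * ∏ i, (π * (1 + y i ^ 2))⁻¹) := by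
  refine StronglyMeasurable.integral_prod_right'
    (f := fun z : (Fin d → ℝ) × (Fin d → ℝ) =>
      FR (fun i => z.1 i + z.2 i / σ i) * ∏ i, (π * (1 + z.2 i ^ 2))⁻¹) ?_
  refine Continuous.stronglyMeasurable ?_
  exact Continuous.mul (by fun_prop) (continuous_finsetProd _ fun i _ =>
        Continuous.inv₀ (by fun_prop) fun v => by positivity)

/-- Laplace inputs — the normalized score ratio recovers the spectrum ratio
as all the scale parameters tend to infinity. -/
theorem score_ratio_recovers_spectrum_laplace
    (d : ℕ)
    (FI : ℝ → ℝ) (hFIc : Continuous FI) (hFIb : ∃ C, ∀ t, |FI t| ≤ C)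
    (hFIi : Integrable FI) (hFIsupp : Function.support FI ⊆ Set.Ico 0 (2 * π))
    (FR : (Fin d → ℝ) → ℝ) (hFRc : Continuous FR) (hFRb : ∃ C, ∀ u, |FR u| ≤ C)
    (hFRi : Integrable FR) (hFRe : ∀ u, FR (-u) = FR u)
    (hFRpos : 0 < ∫ u, |FR u|)
    (f₀ : (Fin d → ℝ) → ℝ)
    (hf₀ : ∀ x, f₀ x = ∫ θ' in (0:ℝ)..(2 * π), ∫ w' : Fin d → ℝ,
        FI θ' * FR w' * Real.cos ((∑ i, w' i * x i) + θ'))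
    (S : ℝ → (Fin d → ℝ) → (Fin d → ℝ) → ℝ)
    -- expectation over x with independent components, x_i ∼ Laplace(0, σ_i), written
    -- via the product density ∏ i, (1/(2σ_i)) exp(−|x_i|/σ_i) with respect to Lebesgue measure
    (hS : ∀ θ w σ, S θ w σ =
      ∫ x : Fin d → ℝ,
        (∏ i, (1 / (2 * σ i)) * Real.exp (-|x i| / σ i)) *
          (f₀ x * Real.cos ((∑ i, w i * x i) + θ)))
    (θ : ℝ) (hθ : θ ∈ Set.Ico 0 (2 * π)) (hcosθ : Real.cos θ ≠ 0)
    (hFIcos : (∫ t in (0:ℝ)..(2 * π), FI t * Real.cos t) ≠ 0)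
    (hdom : ∃ G : (Fin d → ℝ) → ℝ, Integrable G ∧ ∃ T₀ > (0 : ℝ),
      ∀ σ : Fin d → ℝ, (∀ i, T₀ ≤ σ i) → ∀ u : Fin d → ℝ,
        (∏ i, σ i / π) * |S θ u σ| ≤ G u) :
    ∀ w : Fin d → ℝ, ∀ ε > (0 : ℝ), ∃ T : ℝ,
      ∀ σ : Fin d → ℝ, (∀ i, 0 < σ i) → (∀ i, T < σ i) →
        |(|S θ w σ|) / (∫ u, |S θ u σ|) - |FR w| / (∫ u, |FR u|)| < ε := by
  intro w ε hε
  obtain ⟨G, hG, T₀, hT₀, hdom⟩ := hdom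
  set A := ∫ t in (0:ℝ)..(2 * π), FI t * Real.cos t with hA
  set J : (Fin d → ℝ) → (Fin d → ℝ) → ℝ := fun u σ => ∫ y : Fin d → ℝ,
      FR (fun i => u i + y i / σ i) * ∏ i, (π * (1 + y i ^ 2))⁻¹ with hJ
  have key : ∀ σ : Fin d → ℝ, (∀ i, 0 < σ i) → ∀ u,
      (∏ i, σ i / π) * S θ u σ = A * Real.cos θ * J u σ := by
    intro σ hσ u
    have e : ∀ x, f₀ x = A * ∫ w' : Fin d → ℝ, FR w' * Real.cos (∑ i, w' i * x i) := fun x => by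
      rw [hf₀, f0_aux d FI hFIc FR hFRi hFRe]
    have h := S_aux d FR hFRc hFRi hFRe σ hσ u θ
    rw [mul_assoc, ← h, hS, mul_left_comm A, ← integral_const_mul A]
    congr 2
    ext x
    rw [e]
    ring
  have hcpos : ∀ σ : Fin d → ℝ, (∀ i, 0 < σ i) → 0 < ∏ i, σ i / π := fun σ hσ =>
    Finset.prod_pos fun i _ => div_pos (hσ i) Real.pi_pos
  have key' : ∀ σ : Fin d → ℝ, (∀ i, 0 < σ i) → ∀ u,
      (∏ i, σ i / π) * |S θ u σ| = |A * Real.cos θ * J u σ| := by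
    intro σ hσ u
    rw [← key σ hσ u, abs_mul, abs_of_pos (hcpos σ hσ)]
  have hAc : A * Real.cos θ ≠ 0 := mul_ne_zero hFIcos hcosθ
  have hlim : ∀ u, Tendsto (fun σ : Fin d → ℝ => |A * Real.cos θ * J u σ|)
      (Filter.pi fun _ => atTop) (nhds |A * Real.cos θ * FR u|) := fun u =>
    ((lim_aux d FR hFRc hFRb u).const_mul _).abs
  have hev : ∀ᶠ σ : Fin d → ℝ in Filter.pi fun _ => atTop, ∀ i, T₀ ≤ σ i :=
    eventually_pi fun i => eventually_ge_atTop T₀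
  have hint : Tendsto (fun σ : Fin d → ℝ => ∫ u, |A * Real.cos θ * J u σ|)
      (Filter.pi fun _ => atTop) (nhds (∫ u, |A * Real.cos θ * FR u|)) := by
    refine tendsto_integral_filter_of_dominated_convergence G ?_ ?_ hG
      (Eventually.of_forall fun u => hlim u)
    · exact Eventually.of_forall fun σ =>
        (((meas_aux d FR hFRc σ).const_mul _).norm).aestronglyMeasurable
    · filter_upwards [hev] with σ hσ
      refine Eventually.of_forall fun u => ?_
      rw [Real.norm_eq_abs, abs_abs, ← key' σ (fun i => hT₀.trans_le (hσ i)) u]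
      exact hdom σ hσ u
  have hI : ∫ u, |A * Real.cos θ * FR u| = |A * Real.cos θ| * ∫ u, |FR u| := by
    rw [← integral_const_mul]
    simp only [abs_mul]
  have hI0 : |A * Real.cos θ| * ∫ u, |FR u| ≠ 0 := mul_ne_zero (abs_ne_zero.2 hAc) hFRpos.ne'
  have hfin := (hlim w).div hint (by rw [hI]; exact hI0)
  rw [hI, abs_mul (A * Real.cos θ) (FR w), mul_div_mul_left _ _ (abs_ne_zero.2 hAc)] at hfin
  have hev2 := (Metric.tendsto_nhds.1 hfin) ε hε
  obtain ⟨I, t, ht, hsub⟩ := mem_pi'.1 hev2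
  choose T hT using fun i => mem_atTop_sets.1 (ht i)
  refine ⟨∑ i, |T i|, fun σ hσ hTσ => ?_⟩
  have hmem : σ ∈ Set.pi (↑I) t := fun i _ => hT i _ <|
    (le_abs_self _).trans ((Finset.single_le_sum (f := fun i => |T i|)
      (fun j _ => abs_nonneg _) (Finset.mem_univ i)).trans (hTσ i).le)
  have h := hsub hmem
  simp only [Set.mem_ofPred_eq, Real.dist_eq, Pi.div_apply] at h
  have e2 : ∫ u, |A * Real.cos θ * J u σ| = (∏ i, σ i / π) * ∫ u, |S θ u σ| := by
    rw [← integral_const_mul]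
    congr 1
    ext u
    exact (key' σ hσ u).symm
  rw [e2, ← key' σ hσ w, mul_div_mul_left _ _ (hcpos σ hσ).ne'] at h
  exact h
end

section
/- For every fixed ω_I ∈ ℝ^q and ω_R ∈ ℝ^k: S(ω_I, ω_R; λ) / c(λ) converges, as λ → ∞, to F_R(ω_R) · ∫_{ℝ^q} F_I(ω_I') ( H_I(ω_I, ω_I') + H_I(ω_I, −ω_I') ) dν_I(ω_I'). -/
open MeasureTheory Filter Real

/-- pointwise limit of the normalized score. -/
theorem normalized_score_tendsto_spectrum
    (q k : ℕ) (X : Type*) [MeasurableSpace X]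
    (νI : Measure (Fin q → ℝ)) [IsFiniteMeasure νI]
    (FI : (Fin q → ℝ) → ℝ) (FR : (Fin k → ℝ) → ℝ)
    (hFIc : Continuous FI) (hFIb : ∃ C, ∀ a, |FI a| ≤ C) (hFIi : Integrable FI νI)
    (hFRc : Continuous FR) (hFRb : ∃ C, ∀ u, |FR u| ≤ C) (hFRi : Integrable FR)
    (hFRe : ∀ u, FR (-u) = FR u)
    (μ : ℝ → Measure X) (hμ : ∀ l, 0 < l → IsProbabilityMeasure (μ l))
    (φ : X → (Fin q → ℝ) × (Fin k → ℝ) → ℝ)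
    (hφm : Measurable (Function.uncurry φ))
    (hφb : ∀ x ω, |φ x ω| ≤ 1)
    (HI : (Fin q → ℝ) → (Fin q → ℝ) → ℝ)
    (hHIc : Continuous (Function.uncurry HI)) (hHIb : ∃ C, ∀ a b, |HI a b| ≤ C)
    (HR : (Fin k → ℝ) → ℝ → ℝ)
    (hHRnn : ∀ u l, 0 < l → 0 ≤ HR u l)
    (hHRi : ∀ l, 0 < l → Integrable (fun u => HR u l))
    (c : ℝ → ℝ) (hc : ∀ l, c l = ∫ u, HR u l) (hcpos : ∀ l, 0 < l → 0 < c l)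
    (f₀ : X → ℝ)
    (hf₀ : ∀ x, f₀ x = ∫ p : (Fin q → ℝ) × (Fin k → ℝ),
        FI p.1 * FR p.2 * φ x p ∂(νI.prod volume))
    (S : (Fin q → ℝ) → (Fin k → ℝ) → ℝ → ℝ)
    (hS : ∀ θ w l, S θ w l = ∫ x, f₀ x * φ x (θ, w) ∂(μ l))
    (hOrth : ∀ l, 0 < l → ∀ ωI ωR ωI' ωR',
      (∫ x, φ x (ωI, ωR) * φ x (ωI', ωR') ∂(μ l))
        = HI ωI ωI' * HR (ωR - ωR') l + HI ωI (-ωI') * HR (ωR + ωR') l)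
    (hApprox : ∀ g : (Fin k → ℝ) → ℝ, Continuous g → (∃ C, ∀ u, |g u| ≤ C) → ∀ v : Fin k → ℝ,
      Tendsto (fun l => (∫ u, g u * HR (v - u) l) / c l) atTop (nhds (g v))) :
    ∀ ωI : Fin q → ℝ, ∀ ωR : Fin k → ℝ,
      Tendsto (fun l => S ωI ωR l / c l) atTop
        (nhds (FR ωR * ∫ a, FI a * (HI ωI a + HI ωI (-a)) ∂νI)) := by
  intro ωI ωR
  obtain ⟨CI, hCI⟩ := hHIb
  obtain ⟨CR, hCR⟩ := hFRb
  have hHIm : Continuous (fun a => HI ωI a) :=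
    hHIc.comp (Continuous.prodMk continuous_const continuous_id)
  have hHIm' : Continuous (fun a => HI ωI (-a)) := hHIm.comp continuous_neg
  have hA : Integrable (fun a => FI a * HI ωI a) νI :=
    hFIi.mul_bdd (c := CI) hHIm.aestronglyMeasurable (Eventually.of_forall fun a => hCI ωI a)
  have hB : Integrable (fun a => FI a * HI ωI (-a)) νI :=
    hFIi.mul_bdd (c := CI) hHIm'.aestronglyMeasurable (Eventually.of_forall fun a => hCI ωI (-a))
  have key : ∀ l, 0 < l → S ωI ωR l =
      (∫ u, FR u * HR (ωR - u) l) * ∫ a, FI a * (HI ωI a + HI ωI (-a)) ∂νI := by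
    intro l hl
    have := hμ l hl
    have hG : Integrable (fun p : (Fin q → ℝ) × (Fin k → ℝ) => FI p.1 * FR p.2)
        (νI.prod volume) := hFIi.mul_prod hFRi
    have h1 : Integrable (fun u => FR u * HR (ωR - u) l) :=
      ((hHRi l hl).comp_sub_left ωR).bdd_mul (c := CR) hFRc.aestronglyMeasurable
        (Eventually.of_forall fun a => hCR a)
    have h2 : Integrable (fun u => FR u * HR (ωR + u) l) :=
      ((hHRi l hl).comp_add_left ωR).bdd_mul (c := CR) hFRc.aestronglyMeasurable
        (Eventually.of_forall fun a => hCR a)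
    have h12 : (∫ u, FR u * HR (ωR + u) l) = ∫ u, FR u * HR (ωR - u) l := by
      rw [← integral_neg_eq_self]
      simp only [hFRe, sub_eq_add_neg]
    have hφ1 : Measurable (fun x => φ x (ωI, ωR)) :=
      hφm.comp (measurable_id.prodMk measurable_const)
    have hint : Integrable (Function.uncurry fun x (p : (Fin q → ℝ) × (Fin k → ℝ)) =>
        (FI p.1 * FR p.2) * (φ x p * φ x (ωI, ωR))) ((μ l).prod (νI.prod volume)) := by
      have hG2 : Integrable (fun z : X × ((Fin q → ℝ) × (Fin k → ℝ)) => FI z.2.1 * FR z.2.2)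
        ((μ l).prod (νI.prod volume)) := hG.comp_snd (μ l)
      refine hG2.mul_bdd (c := 1) (hφm.mul (hφ1.comp measurable_fst)).aestronglyMeasurable
        (Eventually.of_forall fun z => ?_)
      simp only [Real.norm_eq_abs]
      change |φ z.1 z.2 * φ z.1 (ωI, ωR)| ≤ 1
      rw [abs_mul]
      exact mul_le_one₀ (hφb _ _) (abs_nonneg _) (hφb _ _)
    calc S ωI ωR l = ∫ x, ∫ p : (Fin q → ℝ) × (Fin k → ℝ),
          (FI p.1 * FR p.2) * (φ x p * φ x (ωI, ωR)) ∂(νI.prod volume) ∂(μ l) := by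
          rw [hS]
          congr 1
          ext x
          rw [hf₀, ← integral_mul_const]
          simp only [mul_assoc]
      _ = ∫ p : (Fin q → ℝ) × (Fin k → ℝ), ∫ x,
          (FI p.1 * FR p.2) * (φ x p * φ x (ωI, ωR)) ∂(μ l) ∂(νI.prod volume) :=
          integral_integral_swap hint
      _ = ∫ p : (Fin q → ℝ) × (Fin k → ℝ),
          ((FI p.1 * HI ωI p.1) * (FR p.2 * HR (ωR - p.2) l)
          + (FI p.1 * HI ωI (-p.1)) * (FR p.2 * HR (ωR + p.2) l)) ∂(νI.prod volume) := by
          congr 1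
          ext p
          rw [integral_const_mul]
          have := hOrth l hl ωI ωR p.1 p.2
          simp only [mul_comm (φ _ (ωI, ωR))] at this
          rw [this]
          ring
      _ = _ := by
          rw [integral_add (hA.mul_prod h1) (hB.mul_prod h2),
            integral_prod_mul (fun a => FI a * HI ωI a) (fun u => FR u * HR (ωR - u) l),
            integral_prod_mul (fun a => FI a * HI ωI (-a)) (fun u => FR u * HR (ωR + u) l), h12]
          simp only [mul_add]
          rw [integral_add hA hB]
          ring
  refine ((hApprox FR hFRc ⟨CR, hCR⟩ ωR).mul_const _).congr' ?_
  filter_upwards [eventually_gt_atTop 0] with l hl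
  rw [key l hl]
  ring
end

section
/- Fix ω_I ∈ ℝ^q and assume there exist a Lebesgue-integrable G : ℝ^k → ℝ and λ₀ > 0 such that |S(ω_I, u; λ)| / c(λ) ≤ G(u) for all u ∈ ℝ^k and all λ ≥ λ₀. Then ∫_{ℝ^k} |S(ω_I, u; λ)| / c(λ) du converges, as λ → ∞, to | ∫_{ℝ^q} F_I(ω_I') ( H_I(ω_I, ω_I') + H_I(ω_I, −ω_I') ) dν_I(ω_I') | · ∫_{ℝ^k} |F_R(u)| du. -/
open MeasureTheory Filter Real

/-- limit of the normalized integrated absolute score. -/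
theorem integral_abs_normalized_score_tendsto
    (q k : ℕ) (X : Type*) [MeasurableSpace X]
    (νI : Measure (Fin q → ℝ)) [IsFiniteMeasure νI]
    (FI : (Fin q → ℝ) → ℝ) (FR : (Fin k → ℝ) → ℝ)
    (hFIc : Continuous FI) (hFIb : ∃ C, ∀ a, |FI a| ≤ C) (hFIi : Integrable FI νI)
    (hFRc : Continuous FR) (hFRb : ∃ C, ∀ u, |FR u| ≤ C) (hFRi : Integrable FR)
    (hFRe : ∀ u, FR (-u) = FR u)
    (μ : ℝ → Measure X) (hμ : ∀ l, 0 < l → IsProbabilityMeasure (μ l))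
    (φ : X → (Fin q → ℝ) × (Fin k → ℝ) → ℝ)
    (hφm : Measurable (Function.uncurry φ))
    (hφb : ∀ x ω, |φ x ω| ≤ 1)
    (HI : (Fin q → ℝ) → (Fin q → ℝ) → ℝ)
    (hHIc : Continuous (Function.uncurry HI)) (hHIb : ∃ C, ∀ a b, |HI a b| ≤ C)
    (HR : (Fin k → ℝ) → ℝ → ℝ)
    (hHRnn : ∀ u l, 0 < l → 0 ≤ HR u l)
    (hHRi : ∀ l, 0 < l → Integrable (fun u => HR u l))
    (c : ℝ → ℝ) (hc : ∀ l, c l = ∫ u, HR u l) (hcpos : ∀ l, 0 < l → 0 < c l)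
    (f₀ : X → ℝ)
    (hf₀ : ∀ x, f₀ x = ∫ p : (Fin q → ℝ) × (Fin k → ℝ),
        FI p.1 * FR p.2 * φ x p ∂(νI.prod volume))
    (S : (Fin q → ℝ) → (Fin k → ℝ) → ℝ → ℝ)
    (hS : ∀ θ w l, S θ w l = ∫ x, f₀ x * φ x (θ, w) ∂(μ l))
    (hOrth : ∀ l, 0 < l → ∀ ωI ωR ωI' ωR',
      (∫ x, φ x (ωI, ωR) * φ x (ωI', ωR') ∂(μ l))
        = HI ωI ωI' * HR (ωR - ωR') l + HI ωI (-ωI') * HR (ωR + ωR') l)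
    (hApprox : ∀ g : (Fin k → ℝ) → ℝ, Continuous g → (∃ C, ∀ u, |g u| ≤ C) → ∀ v : Fin k → ℝ,
      Tendsto (fun l => (∫ u, g u * HR (v - u) l) / c l) atTop (nhds (g v)))
    (ωI : Fin q → ℝ)
    (hdom : ∃ G : (Fin k → ℝ) → ℝ, Integrable G ∧ ∃ l₀ > (0 : ℝ),
      ∀ u : Fin k → ℝ, ∀ l, l₀ ≤ l → |S ωI u l| / c l ≤ G u) :
    Tendsto (fun l => ∫ u, |S ωI u l| / c l) atTop
      (nhds (|∫ a, FI a * (HI ωI a + HI ωI (-a)) ∂νI| * ∫ u, |FR u|)) := by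
  obtain ⟨CH, hCH⟩ := hHIb
  obtain ⟨CR, hCR⟩ := hFRb
  have hFF : Integrable (fun p : (Fin q → ℝ) × (Fin k → ℝ) => FI p.1 * FR p.2)
      (νI.prod volume) := hFIi.mul_prod hFRi
  have hHI1 : Continuous (fun a => HI ωI a) :=
    hHIc.comp (continuous_const.prodMk continuous_id)
  have hHI2 : Continuous (fun a => HI ωI (-a)) :=
    hHIc.comp (continuous_const.prodMk continuous_neg)
  have hA : Integrable (fun a => FI a * HI ωI a) νI :=
    hFIi.mul_bdd (c := CH) hHI1.aestronglyMeasurable (ae_of_all _ fun a => hCH _ _)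
  have hB : Integrable (fun a => FI a * HI ωI (-a)) νI :=
    hFIi.mul_bdd (c := CH) hHI2.aestronglyMeasurable (ae_of_all _ fun a => hCH _ _)
  have hf₀m : StronglyMeasurable f₀ := by
    have h : StronglyMeasurable (Function.uncurry
        (fun (x : X) (p : (Fin q → ℝ) × (Fin k → ℝ)) => FI p.1 * FR p.2 * φ x p)) := by
      apply Measurable.stronglyMeasurable
      have h1 : Measurable (fun z : X × ((Fin q → ℝ) × (Fin k → ℝ)) =>
        FI z.2.1 * FR z.2.2) := by
        have := hFIc.measurable
        have := hFRc.measurable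
        fun_prop
      exact h1.mul hφm
    have := h.integral_prod_right (ν := νI.prod volume)
    rw [show f₀ = _ from funext hf₀]
    exact this
  have hSm : ∀ l, 0 < l → StronglyMeasurable (fun u => S ωI u l) := by
    intro l hl
    have := hμ l hl
    have h : StronglyMeasurable (Function.uncurry
        (fun (u : Fin k → ℝ) (x : X) => f₀ x * φ x (ωI, u))) := by
      apply Measurable.stronglyMeasurable
      have h1 : Measurable (fun z : (Fin k → ℝ) × X => f₀ z.2) :=
        hf₀m.measurable.comp measurable_snd
      have h2 : Measurable (fun z : (Fin k → ℝ) × X => (z.2, (ωI, z.1))) := by fun_prop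
      exact h1.mul (hφm.comp h2)
    have := h.integral_prod_right (ν := μ l)
    rw [show (fun u => S ωI u l) = _ from funext fun u => hS ωI u l]
    exact this
  have hSeq : ∀ l, 0 < l → ∀ v, S ωI v l =
      (∫ a, FI a * (HI ωI a + HI ωI (-a)) ∂νI) * ∫ u, FR u * HR (v - u) l := by
    intro l hl v
    have := hμ l hl
    have hR1 : Integrable (fun u => FR u * HR (v - u) l) :=
      ((hHRi l hl).comp_sub_left v).bdd_mul (c := CR) hFRc.aestronglyMeasurable
        (ae_of_all _ fun a => hCR _)
    have hneg : (fun u => FR u * HR (v + u) l) = fun u => (fun u => FR u * HR (v - u) l) (-u) := by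
      funext u
      simp [hFRe]
    have hR2 : Integrable (fun u => FR u * HR (v + u) l) := by
      rw [hneg]
      exact hR1.comp_neg
    have hR2e : ∫ u, FR u * HR (v + u) l = ∫ u, FR u * HR (v - u) l := by
      rw [hneg]
      exact integral_neg_eq_self (fun u => FR u * HR (v - u) l) volume
    have hint : Integrable (Function.uncurry
        (fun (x : X) (p : (Fin q → ℝ) × (Fin k → ℝ)) =>
          FI p.1 * FR p.2 * (φ x (ωI, v) * φ x p))) ((μ l).prod (νI.prod volume)) := by
      have h1 : Integrable (fun z : X × ((Fin q → ℝ) × (Fin k → ℝ)) => FI z.2.1 * FR z.2.2)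
          ((μ l).prod (νI.prod volume)) := hFF.comp_snd (μ l)
      have h2 : Measurable (fun z : X × ((Fin q → ℝ) × (Fin k → ℝ)) => (z.1, (ωI, v))) := by
        fun_prop
      refine h1.mul_bdd (c := 1) ((hφm.comp h2).mul hφm).aestronglyMeasurable (ae_of_all _ fun z => ?_)
      simp only [Pi.mul_apply, Function.comp, Function.uncurry, Real.norm_eq_abs, abs_mul]
      exact mul_le_one₀ (hφb _ _) (abs_nonneg _) (hφb _ _)
    calc S ωI v l = ∫ x, ∫ p : (Fin q → ℝ) × (Fin k → ℝ),
          FI p.1 * FR p.2 * (φ x (ωI, v) * φ x p) ∂(νI.prod volume) ∂(μ l) := by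
            rw [hS]
            congr 1
            funext x
            rw [hf₀, ← integral_mul_const]
            congr 1
            funext p
            ring
      _ = ∫ p : (Fin q → ℝ) × (Fin k → ℝ), ∫ x,
          FI p.1 * FR p.2 * (φ x (ωI, v) * φ x p) ∂(μ l) ∂(νI.prod volume) :=
            integral_integral_swap hint
      _ = ∫ p : (Fin q → ℝ) × (Fin k → ℝ),
          ((FI p.1 * HI ωI p.1) * (FR p.2 * HR (v - p.2) l) +
            (FI p.1 * HI ωI (-p.1)) * (FR p.2 * HR (v + p.2) l)) ∂(νI.prod volume) := by
            congr 1
            funext p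
            rw [integral_const_mul, hOrth l hl ωI v p.1 p.2]
            ring
      _ = _ := by
            rw [integral_add (hA.mul_prod hR1) (hB.mul_prod hR2),
              integral_prod_mul (fun a => FI a * HI ωI a) (fun u => FR u * HR (v - u) l),
              integral_prod_mul (fun a => FI a * HI ωI (-a)) (fun u => FR u * HR (v + u) l), hR2e]
            simp only [mul_add]
            rw [integral_add hA hB]
            ring
  obtain ⟨G, hG, l₀, hl₀, hGb⟩ := hdom
  have hlim : |∫ a, FI a * (HI ωI a + HI ωI (-a)) ∂νI| * ∫ u, |FR u| =
      ∫ u, |(∫ a, FI a * (HI ωI a + HI ωI (-a)) ∂νI) * FR u| := by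
    simp only [abs_mul]
    rw [integral_const_mul]
  rw [hlim]
  refine tendsto_integral_filter_of_dominated_convergence G ?_ ?_ hG ?_
  · filter_upwards [eventually_gt_atTop 0] with l hl
    exact ((hSm l hl).measurable.abs.div_const (c l)).aestronglyMeasurable
  · filter_upwards [eventually_ge_atTop l₀] with l hl
    refine ae_of_all _ fun u => ?_
    have hcl := hcpos l (hl₀.trans_le hl)
    rw [Real.norm_eq_abs, abs_of_nonneg (div_nonneg (abs_nonneg _) hcl.le)]
    exact hGb u l hl
  · refine ae_of_all _ fun v => ?_
    have h := ((hApprox FR hFRc ⟨CR, hCR⟩ v).const_mul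
      (∫ a, FI a * (HI ωI a + HI ωI (-a)) ∂νI)).abs
    refine h.congr' ?_
    filter_upwards [eventually_gt_atTop 0] with l hl
    rw [hSeq l hl v, ← mul_div_assoc, abs_div, abs_of_pos (hcpos l hl)]
end

section
/- If x_i ∼ N(0, σ_i²) for each i, then E[cos(ωᵀx + θ) cos(ω'ᵀx + θ')] = (1/2) cos(θ + θ') ∏_{i=1}^d exp(−σ_i² (ω_i + ω_i')² / 2) + (1/2) cos(θ − θ') ∏_{i=1}^d exp(−σ_i² (ω_i − ω_i')² / 2). -/
open MeasureTheory ProbabilityTheory Real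

theorem aux_cos (d : ℕ) (σ a : Fin d → ℝ) (c : ℝ) :
    Integrable (fun x : Fin d → ℝ => Real.cos ((∑ i, a i * x i) + c))
      (Measure.pi fun i => gaussianReal 0 ((σ i) ^ 2).toNNReal) ∧
    (∫ x : Fin d → ℝ, Real.cos ((∑ i, a i * x i) + c)
      ∂(Measure.pi fun i => gaussianReal 0 ((σ i) ^ 2).toNNReal))
    = Real.cos c * ∏ i, Real.exp (-(σ i) ^ 2 * (a i) ^ 2 / 2) := by
  set μ := Measure.pi fun i => gaussianReal 0 ((σ i) ^ 2).toNNReal with hμ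
  have hI : Integrable (fun x : Fin d → ℝ =>
      Complex.exp ((((∑ i, a i * x i) + c : ℝ) : ℂ) * Complex.I)) μ := by
    refine Integrable.of_bound (C := 1) ?_ ?_
    · exact (by fun_prop : Continuous _).aestronglyMeasurable
    · refine Filter.Eventually.of_forall fun x => ?_
      rw [Complex.norm_exp_ofReal_mul_I]
  have hre : ∀ x : Fin d → ℝ, Real.cos ((∑ i, a i * x i) + c) =
      RCLike.re (Complex.exp ((((∑ i, a i * x i) + c : ℝ) : ℂ) * Complex.I)) := by
    intro x
    exact (Complex.exp_ofReal_mul_I_re _).symm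
  have key : ∫ x : Fin d → ℝ,
      Complex.exp ((((∑ i, a i * x i) + c : ℝ) : ℂ) * Complex.I) ∂μ =
      Complex.exp (c * Complex.I) *
        ((∏ i, Real.exp (-(σ i) ^ 2 * (a i) ^ 2 / 2) : ℝ) : ℂ) := by
    have h1 : ∀ x : Fin d → ℝ,
        Complex.exp ((((∑ i, a i * x i) + c : ℝ) : ℂ) * Complex.I) =
        Complex.exp (c * Complex.I) * ∏ i, Complex.exp (a i * x i * Complex.I) := by
      intro x
      rw [← Complex.exp_sum, ← Complex.exp_add]
      congr 1
      push_cast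
      rw [← Finset.sum_mul]
      ring
    simp_rw [h1]
    rw [integral_const_mul, hμ,
      integral_fintype_prod_eq_prod (f := fun i (y : ℝ) => Complex.exp (a i * y * Complex.I))]
    congr 1
    push_cast
    refine Finset.prod_congr rfl fun i _ => ?_
    rw [← charFun_apply_real, charFun_gaussianReal]
    congr 1
    rw [Real.coe_toNNReal _ (sq_nonneg _)]
    push_cast
    ring
  refine ⟨?_, ?_⟩
  · simp_rw [hre]
    exact hI.re
  · simp_rw [hre]
    rw [integral_re hI, key]
    change (_ : ℂ).re = _
    rw [Complex.re_mul_ofReal, Complex.exp_ofReal_mul_I_re]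

/-- expected product of cosines under independent Gaussian inputs. -/
theorem expectation_cos_cos_gaussian
    (d : ℕ) (σ ω ω' : Fin d → ℝ) (hσ : ∀ i, 0 < σ i) (θ θ' : ℝ) :
    (∫ x : Fin d → ℝ,
        Real.cos ((∑ i, ω i * x i) + θ) * Real.cos ((∑ i, ω' i * x i) + θ')
      ∂(Measure.pi fun i => gaussianReal 0 ((σ i) ^ 2).toNNReal))
    = (1 / 2) * Real.cos (θ + θ') *
        (∏ i, Real.exp (-(σ i) ^ 2 * (ω i + ω' i) ^ 2 / 2))
      + (1 / 2) * Real.cos (θ - θ') *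
        (∏ i, Real.exp (-(σ i) ^ 2 * (ω i - ω' i) ^ 2 / 2)) := by
  obtain ⟨i1, e1⟩ := aux_cos d σ (fun i => ω i + ω' i) (θ + θ')
  obtain ⟨i2, e2⟩ := aux_cos d σ (fun i => ω i - ω' i) (θ - θ')
  have h : ∀ x : Fin d → ℝ,
      Real.cos ((∑ i, ω i * x i) + θ) * Real.cos ((∑ i, ω' i * x i) + θ') =
      (1 / 2) * Real.cos ((∑ i, (ω i + ω' i) * x i) + (θ + θ')) +
      (1 / 2) * Real.cos ((∑ i, (ω i - ω' i) * x i) + (θ - θ')) := by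
    intro x
    have s1 : (∑ i, (ω i + ω' i) * x i) + (θ + θ') =
        ((∑ i, ω i * x i) + θ) + ((∑ i, ω' i * x i) + θ') := by
      simp only [add_mul, Finset.sum_add_distrib]; ring
    have s2 : (∑ i, (ω i - ω' i) * x i) + (θ - θ') =
        ((∑ i, ω i * x i) + θ) - ((∑ i, ω' i * x i) + θ') := by
      simp only [sub_mul, Finset.sum_sub_distrib]; ring
    rw [s1, s2, Real.cos_add (_ + θ), Real.cos_sub (_ + θ)]
    ring
  simp_rw [h]
  rw [integral_add (i1.const_mul _) (i2.const_mul _), integral_const_mul, integral_const_mul,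
    e1, e2]
  ring
end

section
/- If x_i ∼ Cauchy(0, σ_i) for each i (i.e., x_i has density t ↦ (σ_i/π)/(σ_i² + t²)), then E[cos(ωᵀx + θ) cos(ω'ᵀx + θ')] = (1/2) cos(θ + θ') ∏_{i=1}^d exp(−σ_i |ω_i + ω_i'|) + (1/2) cos(θ − θ') ∏_{i=1}^d exp(−σ_i |ω_i − ω_i'|). -/
open MeasureTheory Real
open scoped FourierTransform

lemma cauchy_aux_integrable (s : ℝ) (hs : 0 < s) :
    Integrable (fun t : ℝ => (s / π) / (s ^ 2 + t ^ 2)) := by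
  have h := (integrable_inv_one_add_sq.comp_div hs.ne').const_mul (1 / (π * s))
  refine h.congr (Filter.Eventually.of_forall fun t => ?_)
  have : s ^ 2 + t ^ 2 ≠ 0 := by positivity
  have := pi_ne_zero
  simp only
  field_simp

lemma cauchy_aux_exp_integrable (s : ℝ) (hs : 0 < s) (w : ℝ) :
    IntegrableOn (fun t : ℝ => Complex.exp (((2 * π * (-w) : ℝ) * Complex.I + (2 * π * s : ℝ)) * t)) (Set.Iic 0) ∧
    IntegrableOn (fun t : ℝ => Complex.exp (((2 * π * (-w) : ℝ) * Complex.I - (2 * π * s : ℝ)) * t)) (Set.Ioi 0) := by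
  have := pi_pos
  constructor
  · apply integrableOn_exp_mul_complex_Iic
    simp; positivity
  · apply integrableOn_exp_mul_complex_Ioi
    simp; positivity

lemma cauchy_aux_fourier (s : ℝ) (hs : 0 < s) :
    𝓕 (fun t : ℝ => (Real.exp (-(2 * π * s) * |t|) : ℂ)) =
      fun w : ℝ => (((s / π) / (s ^ 2 + w ^ 2) : ℝ) : ℂ) := by
  ext w
  rw [Real.fourier_real_eq_integral_exp_smul]
  have hpi := pi_pos
  obtain ⟨h1, h2⟩ := cauchy_aux_exp_integrable s hs w
  have e1 : ∀ t ∈ Set.Iic (0:ℝ), Complex.exp (((2 * π * (-w) : ℝ) * Complex.I + (2 * π * s : ℝ)) * t)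
      = Complex.exp (↑(-2 * π * t * w) * Complex.I) • (Real.exp (-(2 * π * s) * |t|) : ℂ) := by
    intro t ht
    rw [abs_of_nonpos ht, smul_eq_mul, Complex.ofReal_exp, ← Complex.exp_add]
    congr 1; push_cast; ring
  have e2 : ∀ t ∈ Set.Ioi (0:ℝ), Complex.exp (((2 * π * (-w) : ℝ) * Complex.I - (2 * π * s : ℝ)) * t)
      = Complex.exp (↑(-2 * π * t * w) * Complex.I) • (Real.exp (-(2 * π * s) * |t|) : ℂ) := by
    intro t ht
    rw [abs_of_pos ht, smul_eq_mul, Complex.ofReal_exp, ← Complex.exp_add]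
    congr 1; push_cast; ring
  rw [← intervalIntegral.integral_Iic_add_Ioi (b := 0) (h1.congr_fun e1 measurableSet_Iic)
    (h2.congr_fun e2 measurableSet_Ioi), ← setIntegral_congr_fun measurableSet_Iic e1,
    ← setIntegral_congr_fun measurableSet_Ioi e2, integral_exp_mul_complex_Iic (by simp; positivity),
    integral_exp_mul_complex_Ioi (by simp; positivity)]
  have n1 : (((2 * π * (-w) : ℝ) : ℂ) * Complex.I + (2 * π * s : ℝ)) ≠ 0 := by
    intro h
    have := congrArg Complex.re h
    simp at this
    simp_all
  have n2 : (((2 * π * (-w) : ℝ) : ℂ) * Complex.I - (2 * π * s : ℝ)) ≠ 0 := by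
    intro h
    have := congrArg Complex.re h
    simp at this
    simp_all
  have n3 : ((s : ℂ) ^ 2 + (w : ℂ) ^ 2) ≠ 0 := by
    have : s ^ 2 + w ^ 2 ≠ 0 := by positivity
    exact_mod_cast this
  have n4 : (π : ℂ) ≠ 0 := by exact_mod_cast hpi.ne'
  simp only [Complex.ofReal_zero, mul_zero, Complex.exp_zero]
  push_cast at *
  rw [div_add_div _ _ n1 n2, div_div, div_eq_div_iff (mul_ne_zero n1 n2) (mul_ne_zero n4 n3)]
  linear_combination (-4 * π ^ 2 * s * w ^ 2) * Complex.I_sq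

lemma cauchy_aux_char (s : ℝ) (hs : 0 < s) (a : ℝ) :
    ∫ t : ℝ, (((s / π) / (s ^ 2 + t ^ 2) : ℝ) : ℂ) * Complex.exp (a * t * Complex.I)
      = (Real.exp (-s * |a|) : ℂ) := by
  have hpi := pi_pos
  have hint : Integrable (fun t : ℝ => (Real.exp (-(2 * π * s) * |t|) : ℂ)) := by
    refine Integrable.ofReal (f := fun t : ℝ => Real.exp (-(2 * π * s) * |t|)) ?_
    rw [← integrableOn_univ, ← Set.Iic_union_Ioi (a := (0:ℝ))]
    refine IntegrableOn.union ?_ ?_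
    · refine (integrableOn_exp_mul_Iic (a := 2 * π * s) (by positivity) 0).congr_fun ?_ measurableSet_Iic
      intro t ht
      simp only [abs_of_nonpos (Set.mem_Iic.1 ht)]
      ring_nf
    · refine (integrableOn_exp_mul_Ioi (a := -(2 * π * s)) (by simp; positivity) 0).congr_fun ?_ measurableSet_Ioi
      intro t ht
      simp only [abs_of_pos (Set.mem_Ioi.1 ht)]
  have h := Continuous.fourierInv_fourier_eq (f := fun t : ℝ => (Real.exp (-(2 * π * s) * |t|) : ℂ))
    (by fun_prop) hint (by rw [cauchy_aux_fourier s hs]; exact (cauchy_aux_integrable s hs).ofReal)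
  have h := congrFun h (a / (2 * π))
  rw [cauchy_aux_fourier s hs, Real.fourierInv_eq'] at h
  convert h using 1
  · congr 1; ext t
    rw [smul_eq_mul, mul_comm]
    congr 2
    simp
    field_simp
  · congr 2
    rw [abs_div, abs_of_pos (show 0 < 2 * π by positivity)]
    field_simp

lemma cauchy_aux_multi (d : ℕ) (σ a : Fin d → ℝ) (hσ : ∀ i, 0 < σ i) (c : ℝ) :
    Integrable (fun x : Fin d → ℝ =>
        (∏ i, (σ i / π) / ((σ i) ^ 2 + (x i) ^ 2)) * Real.cos ((∑ i, a i * x i) + c)) ∧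
    ∫ x : Fin d → ℝ,
        (∏ i, (σ i / π) / ((σ i) ^ 2 + (x i) ^ 2)) * Real.cos ((∑ i, a i * x i) + c)
      = Real.cos c * ∏ i, Real.exp (-(σ i) * |a i|) := by
  set F : (Fin d → ℝ) → ℂ := fun x => Complex.exp (c * Complex.I) *
    ∏ i, ((((σ i / π) / ((σ i) ^ 2 + (x i) ^ 2) : ℝ) : ℂ) * Complex.exp (a i * x i * Complex.I)) with hF
  have hre : ∀ x, (∏ i, (σ i / π) / ((σ i) ^ 2 + (x i) ^ 2)) * Real.cos ((∑ i, a i * x i) + c)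
      = RCLike.re (F x) := by
    intro x
    have : F x = ((∏ i, (σ i / π) / ((σ i) ^ 2 + (x i) ^ 2) : ℝ) : ℂ) *
        Complex.exp (((∑ i, a i * x i) + c : ℝ) * Complex.I) := by
      simp only [hF, Finset.prod_mul_distrib, ← Complex.exp_sum]
      rw [mul_left_comm, ← Complex.exp_add]
      push_cast
      rw [← Finset.sum_mul]
      congr 2
      ring
    rw [this, RCLike.re_to_complex, Complex.re_ofReal_mul, Complex.exp_ofReal_mul_I_re]
  have hI : Integrable F := by
    refine Integrable.const_mul ?_ _
    refine Integrable.fintype_prod (f := fun i (t : ℝ) =>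
      (((σ i / π) / ((σ i) ^ 2 + t ^ 2) : ℝ) : ℂ) * Complex.exp (a i * t * Complex.I)) fun i => ?_
    refine (cauchy_aux_integrable (σ i) (hσ i)).ofReal.mul_bdd (c := 1)
      (by fun_prop) (Filter.Eventually.of_forall fun t => ?_)
    rw [← Complex.ofReal_mul, Complex.norm_exp_ofReal_mul_I]
  simp only [hre]
  refine ⟨hI.re, ?_⟩
  rw [integral_re hI]
  simp only [hF]
  rw [integral_const_mul, integral_fintype_prod_volume_eq_prod (fun i (t : ℝ) =>
      (((σ i / π) / ((σ i) ^ 2 + t ^ 2) : ℝ) : ℂ) * Complex.exp (a i * t * Complex.I))]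
  simp only [fun i => cauchy_aux_char (σ i) (hσ i) (a i)]
  rw [← Complex.ofReal_prod, mul_comm, RCLike.re_to_complex, Complex.re_ofReal_mul,
    Complex.exp_ofReal_mul_I_re, mul_comm]

/-- expected product of cosines under independent Cauchy inputs,
with the expectation written via the product density ∏ i, (σ_i/π)/(σ_i² + x_i²). -/
theorem expectation_cos_cos_cauchy
    (d : ℕ) (σ ω ω' : Fin d → ℝ) (hσ : ∀ i, 0 < σ i) (θ θ' : ℝ) :
    (∫ x : Fin d → ℝ,
        (∏ i, (σ i / π) / ((σ i) ^ 2 + (x i) ^ 2)) *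
          (Real.cos ((∑ i, ω i * x i) + θ) * Real.cos ((∑ i, ω' i * x i) + θ')))
    = (1 / 2) * Real.cos (θ + θ') * (∏ i, Real.exp (-(σ i) * |ω i + ω' i|))
      + (1 / 2) * Real.cos (θ - θ') * (∏ i, Real.exp (-(σ i) * |ω i - ω' i|)) := by
  obtain ⟨i1, h1⟩ := cauchy_aux_multi d σ (fun i => ω i + ω' i) hσ (θ + θ')
  obtain ⟨i2, h2⟩ := cauchy_aux_multi d σ (fun i => ω i - ω' i) hσ (θ - θ')
  rw [mul_assoc, mul_assoc, ← h1, ← h2, ← integral_const_mul, ← integral_const_mul,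
    ← integral_add (i1.const_mul _) (i2.const_mul _)]
  congr 1; ext x
  have e1 : (∑ i, (ω i + ω' i) * x i) + (θ + θ')
      = ((∑ i, ω i * x i) + θ) + ((∑ i, ω' i * x i) + θ') := by
    simp only [add_mul, Finset.sum_add_distrib]; ring
  have e2 : (∑ i, (ω i - ω' i) * x i) + (θ - θ')
      = ((∑ i, ω i * x i) + θ) - ((∑ i, ω' i * x i) + θ') := by
    simp only [sub_mul, Finset.sum_sub_distrib]; ring
  rw [e1, e2, Real.cos_add (_ + θ), Real.cos_sub (_ + θ)]
  ring
end

section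
/- If x_i ∼ Laplace(0, σ_i) for each i (i.e., x_i has density t ↦ (1/(2σ_i)) exp(−|t|/σ_i)), then E[cos(ωᵀx + θ) cos(ω'ᵀx + θ')] = (1/2) cos(θ + θ') ∏_{i=1}^d 1/(1 + σ_i² (ω_i + ω_i')²) + (1/2) cos(θ − θ') ∏_{i=1}^d 1/(1 + σ_i² (ω_i − ω_i')²). -/
open MeasureTheory Real

/-- Characteristic integrand of a Laplace density. -/
noncomputable def lapF (s a : ℝ) (x : ℝ) : ℂ :=
  (((1 / (2 * s)) * Real.exp (-|x| / s) : ℝ) : ℂ) * Complex.exp ((a * x : ℝ) * Complex.I)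

lemma lapF_Ioi (s a : ℝ) : Set.EqOn (lapF s a)
    (fun x : ℝ => (1 / (2 * s) : ℂ) * Complex.exp ((-(1 / s) + a * Complex.I : ℂ) * x))
    (Set.Ioi 0) := by
  intro x hx
  have hx : 0 < x := hx
  simp only [lapF, abs_of_pos hx]
  push_cast
  rw [mul_assoc, ← Complex.exp_add]
  congr 2
  ring

lemma lapF_Iic (s a : ℝ) : Set.EqOn (lapF s a)
    (fun x : ℝ => (1 / (2 * s) : ℂ) * Complex.exp ((1 / s + a * Complex.I : ℂ) * x))
    (Set.Iic 0) := by
  intro x hx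
  have hx : x ≤ 0 := hx
  simp only [lapF, abs_of_nonpos hx]
  push_cast
  rw [mul_assoc, ← Complex.exp_add]
  congr 2
  ring

lemma lap_re_neg {s : ℝ} (hs : 0 < s) (a : ℝ) : (-(1 / s) + a * Complex.I : ℂ).re < 0 := by
  have : (-(1 / s) + a * Complex.I : ℂ) = ((-(1 / s) : ℝ) : ℂ) + a * Complex.I := by push_cast; rfl
  rw [this]
  simpa using hs

lemma lap_re_pos {s : ℝ} (hs : 0 < s) (a : ℝ) : 0 < (1 / s + a * Complex.I : ℂ).re := by
  have : (1 / s + a * Complex.I : ℂ) = ((1 / s : ℝ) : ℂ) + a * Complex.I := by push_cast; rfl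
  rw [this]
  simpa using hs

lemma lapF_intOn_Ioi {s : ℝ} (hs : 0 < s) (a : ℝ) : IntegrableOn (lapF s a) (Set.Ioi 0) := by
  rw [integrableOn_congr_fun (lapF_Ioi s a) measurableSet_Ioi]
  exact (integrableOn_exp_mul_complex_Ioi (lap_re_neg hs a) 0).const_mul _

lemma lapF_intOn_Iic {s : ℝ} (hs : 0 < s) (a : ℝ) : IntegrableOn (lapF s a) (Set.Iic 0) := by
  rw [integrableOn_congr_fun (lapF_Iic s a) measurableSet_Iic]
  exact (integrableOn_exp_mul_complex_Iic (lap_re_pos hs a) 0).const_mul _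

lemma lapF_integrable {s : ℝ} (hs : 0 < s) (a : ℝ) : Integrable (lapF s a) := by
  rw [← integrableOn_univ, ← Set.Iic_union_Ioi (a := (0 : ℝ))]
  exact (lapF_intOn_Iic hs a).union (lapF_intOn_Ioi hs a)

lemma lapF_integral {s : ℝ} (hs : 0 < s) (a : ℝ) :
    ∫ x, lapF s a x = ((1 / (1 + s ^ 2 * a ^ 2) : ℝ) : ℂ) := by
  rw [← intervalIntegral.integral_Iic_add_Ioi (lapF_intOn_Iic hs a) (lapF_intOn_Ioi hs a),
    setIntegral_congr_fun measurableSet_Iic (lapF_Iic s a),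
    setIntegral_congr_fun measurableSet_Ioi (lapF_Ioi s a),
    integral_const_mul, integral_const_mul,
    integral_exp_mul_complex_Ioi (lap_re_neg hs a), integral_exp_mul_complex_Iic (lap_re_pos hs a)]
  have h1 : (-(1 / s) + a * Complex.I : ℂ) ≠ 0 := fun h => by
    have := lap_re_neg hs a; rw [h] at this; simp at this
  have h2 : (1 / s + a * Complex.I : ℂ) ≠ 0 := fun h => by
    have := lap_re_pos hs a; rw [h] at this; simp at this
  have hs0 : (s : ℂ) ≠ 0 := by exact_mod_cast hs.ne'
  have h3 : (1 + s ^ 2 * a ^ 2 : ℂ) ≠ 0 := by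
    have : (1 + s ^ 2 * a ^ 2 : ℝ) ≠ 0 := by positivity
    exact_mod_cast this
  have e1 : (-(1 / s) + a * Complex.I : ℂ) * (1 / s + a * Complex.I) * s ^ 2
      = -(1 + s ^ 2 * a ^ 2) := by
    field_simp
    linear_combination (a ^ 2 * s ^ 2 : ℂ) * Complex.I_sq
  push_cast
  simp only [mul_zero, Complex.exp_zero]
  generalize hu : (-(1 / s) + a * Complex.I : ℂ) = u at *
  generalize hv : (1 / s + a * Complex.I : ℂ) = v at *
  have huv : (v - u) * s = 2 := by
    rw [← hu, ← hv]; field_simp; ring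
  have h4 : (1 + s ^ 2 * a ^ 2 : ℂ) = -(u * v * s ^ 2) := by rw [e1]; ring
  rw [h4]
  field_simp
  linear_combination -huv

/-- Real-valued multivariate formula. -/
lemma lap_multi (d : ℕ) (σ a : Fin d → ℝ) (hσ : ∀ i, 0 < σ i) (φ : ℝ) :
    Integrable (fun x : Fin d → ℝ => (∏ i, (1 / (2 * σ i)) * Real.exp (-|x i| / σ i)) *
      Real.cos ((∑ i, a i * x i) + φ)) ∧
    ∫ x : Fin d → ℝ, (∏ i, (1 / (2 * σ i)) * Real.exp (-|x i| / σ i)) *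
      Real.cos ((∑ i, a i * x i) + φ) = Real.cos φ * ∏ i, 1 / (1 + (σ i) ^ 2 * (a i) ^ 2) := by
  have hint : Integrable (fun x : Fin d → ℝ =>
      Complex.exp (φ * Complex.I) * ∏ i, lapF (σ i) (a i) (x i)) :=
    (Integrable.fintype_prod (fun i => lapF_integrable (hσ i) (a i))).const_mul _
  have hre : (fun x : Fin d → ℝ => (∏ i, (1 / (2 * σ i)) * Real.exp (-|x i| / σ i)) *
      Real.cos ((∑ i, a i * x i) + φ)) = fun x : Fin d → ℝ =>
      RCLike.re (Complex.exp (φ * Complex.I) * ∏ i, lapF (σ i) (a i) (x i)) := by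
    funext x
    have : Complex.exp (φ * Complex.I) * ∏ i, lapF (σ i) (a i) (x i) =
        ((∏ i, (1 / (2 * σ i)) * Real.exp (-|x i| / σ i) : ℝ) : ℂ) *
          Complex.exp (((∑ i, a i * x i) + φ : ℝ) * Complex.I) := by
      simp only [lapF]
      rw [Finset.prod_mul_distrib, ← Complex.exp_sum, ← Complex.ofReal_prod, mul_left_comm,
        ← Complex.exp_add, ← Finset.sum_mul, ← Complex.ofReal_sum]
      congr 2
      push_cast
      ring
    rw [this, RCLike.re_to_complex, Complex.re_ofReal_mul, Complex.exp_ofReal_mul_I_re]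
  rw [hre]
  refine ⟨hint.re, ?_⟩
  rw [integral_re hint, integral_const_mul,
    integral_fintype_prod_volume_eq_prod (fun i => lapF (σ i) (a i))]
  simp only [lapF_integral (hσ _)]
  rw [← Complex.ofReal_prod, RCLike.re_to_complex, Complex.re_mul_ofReal,
    Complex.exp_ofReal_mul_I_re]

/-- expected product of cosines under independent Laplace inputs,
with the expectation written via the product density ∏ i, (1/(2σ_i)) exp(−|x_i|/σ_i). -/
theorem expectation_cos_cos_laplace
    (d : ℕ) (σ ω ω' : Fin d → ℝ) (hσ : ∀ i, 0 < σ i) (θ θ' : ℝ) :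
    (∫ x : Fin d → ℝ,
        (∏ i, (1 / (2 * σ i)) * Real.exp (-|x i| / σ i)) *
          (Real.cos ((∑ i, ω i * x i) + θ) * Real.cos ((∑ i, ω' i * x i) + θ')))
    = (1 / 2) * Real.cos (θ + θ') * (∏ i, 1 / (1 + (σ i) ^ 2 * (ω i + ω' i) ^ 2))
      + (1 / 2) * Real.cos (θ - θ') * (∏ i, 1 / (1 + (σ i) ^ 2 * (ω i - ω' i) ^ 2)) := by
  obtain ⟨i1, e1⟩ := lap_multi d σ (fun i => ω i + ω' i) hσ (θ + θ')
  obtain ⟨i2, e2⟩ := lap_multi d σ (fun i => ω i - ω' i) hσ (θ - θ')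
  rw [mul_assoc, mul_assoc, ← e1, ← e2, ← integral_const_mul, ← integral_const_mul,
    ← integral_add (i1.const_mul _) (i2.const_mul _)]
  congr 1
  funext x
  have h1 : (∑ i, (ω i + ω' i) * x i) + (θ + θ') =
      ((∑ i, ω i * x i) + θ) + ((∑ i, ω' i * x i) + θ') := by
    simp only [add_mul, Finset.sum_add_distrib]; ring
  have h2 : (∑ i, (ω i - ω' i) * x i) + (θ - θ') =
      ((∑ i, ω i * x i) + θ) - ((∑ i, ω' i * x i) + θ') := by
    simp only [sub_mul, Finset.sum_sub_distrib]; ring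
  rw [h1, h2, Real.cos_add (_ + θ), Real.cos_sub (_ + θ)]
  ring
end
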